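/- arXiv:1708.07579 — 3 statements merged into one kernel-verified Lean document; each statement's English description precedes it below -/
import Mathlib

section
/- In the Maker-Breaker game on the edge set of K_n where Maker's goal is to claim all edges of some Hamiltonian cycle, if Maker (moving second) has a winning strategy on K_n, then Maker (moving second) also has a winning strategy on K_{n+2}. -/
/-- `MakerWins X F t M B` : in the Maker-Breaker positional game on board `X` with
winning sets `F`, from the position where Maker has claimed the elements of `M`,
Breaker has claimed the elements of `B`, and it is Maker's turn iff `t = true`,
Maker has a winning strategy (he can ensure to claim all elements of some winning set). -/
inductive MakerWins {α : Type} [DecidableEq α] (X : Finset α) (F : Set (Finset α)) :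
    Bool → Finset α → Finset α → Prop
  | claim {t : Bool} {M B : Finset α} (A : Finset α) (hA : A ∈ F) (hAM : A ⊆ M) :
      MakerWins X F t M B
  | makerMove {M B : Finset α} (e : α) (he : e ∈ X) (heM : e ∉ M) (heB : e ∉ B)
      (h : MakerWins X F false (insert e M) B) : MakerWins X F true M B
  | breakerMove {M B : Finset α} (e : α) (he : e ∈ X) (heM : e ∉ M) (heB : e ∉ B)
      (h : ∀ f ∈ X, f ∉ M → f ∉ B → MakerWins X F true M (insert f B)) :
      MakerWins X F false M B

/-- Maker, moving first, has a winning strategy in the game `(X, F)`. -/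
def MakerWinsFirst {α : Type} [DecidableEq α] (X : Finset α) (F : Set (Finset α)) : Prop :=
  MakerWins X F true ∅ ∅

/-- Maker, moving second (Breaker moves first), has a winning strategy in `(X, F)`. -/
def MakerWinsSecond {α : Type} [DecidableEq α] (X : Finset α) (F : Set (Finset α)) : Prop :=
  MakerWins X F false ∅ ∅

/-- The board of games played on the edge set of the complete graph `K_n`. -/
def Board (n : ℕ) : Finset (Sym2 (Fin n)) := (⊤ : SimpleGraph (Fin n)).edgeFinset

/-- Edge sets of Hamiltonian cycles of `K_n`: the winning sets of the Hamiltonicity game. -/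
def HamCycles (n : ℕ) : Set (Finset (Sym2 (Fin n))) :=
  {H | ∃ (a : Fin n) (p : (⊤ : SimpleGraph (Fin n)).Walk a a),
    p.IsHamiltonianCycle ∧ H = p.edges.toFinset}

/-- Edge sets of Hamiltonian paths of `K_n`: the winning sets of the Hamiltonian Path game. -/
def HamPaths (n : ℕ) : Set (Finset (Sym2 (Fin n))) :=
  {H | ∃ (a b : Fin n) (p : (⊤ : SimpleGraph (Fin n)).Walk a b),
    p.IsHamiltonian ∧ H = p.edges.toFinset}

/-- Edge sets of Hamiltonian paths of `K_n` with endpoints `u` and `v`: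
the winning sets of the Fixed Hamiltonian Path game. -/
def FixedHamPaths (n : ℕ) (u v : Fin n) : Set (Finset (Sym2 (Fin n))) :=
  {H | ∃ p : (⊤ : SimpleGraph (Fin n)).Walk u v, p.IsHamiltonian ∧ H = p.edges.toFinset}

/-!
Let Breaker open with `ab`. Maker picks a further vertex `v`, puts `u = a` and claims `uv`. From now
on he plays two games on disjoint boards, both as second player: on the `n` vertices other than `u`,
`v` he plays for a Hamiltonian cycle, and on the `2n` edges from `u` and `v` to these vertices, of
which Breaker owns `ub`, he plays for linking all but at most two of the `n` vertices to `u` or `v`,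
and each of `u`, `v` to at least two of them. The linking game is won by pairing edges once five of
the `n` vertices have been dealt with, and `n ≥ 5` because Maker owns at most half of the edges of
`K_n`.

The Hamiltonian cycle on `n` vertices then extends. If some `x` linked to one of `u`, `v` is
followed by a vertex linked to the other, insert the edge `uv` between them. If not, then each of
`u`, `v` has two neighbours that are consecutive on the cycle, and it is inserted between them.
-/

namespace MakerWins

section Strategies

variable {α β : Type} [DecidableEq α] [DecidableEq β] {X : Finset α} {F : Set (Finset α)}
  {t : Bool} {M B : Finset α}

theorem exists_subset_union_sdiff (h : MakerWins X F t M B) : ∃ A ∈ F, A ⊆ M ∪ X \ B := by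
  induction h with
  | claim A hA hAM => exact ⟨A, hA, hAM.trans Finset.subset_union_left⟩
  | makerMove e he _ heB _ ih =>
    obtain ⟨A, hA, hAM⟩ := ih
    exact ⟨A, hA, hAM.trans (by grind)⟩
  | breakerMove e he heM heB _ ih =>
    obtain ⟨A, hA, hAM⟩ := ih e he heM heB
    exact ⟨A, hA, hAM.trans (by grind)⟩

theorem pass_or_respond (h : MakerWins X F false M B) {f : α} (hfX : f ∈ X) (hfM : f ∉ M)
    (hfB : f ∉ B) : MakerWins X F false M (insert f B) ∨
      ∃ g ∈ X, g ∉ insert f B ∧ MakerWins X F false (insert g M) (insert f B) := by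
  cases h with
  | claim A hA hAM => exact .inl (.claim A hA hAM)
  | breakerMove _ _ _ _ h =>
    cases h f hfX hfM hfB with
    | claim A hA hAM => exact .inl (.claim A hA hAM)
    | makerMove g hg _ hgB h => exact .inr ⟨g, hg, hgB, h⟩

/-- `IsStrategy X F P` says that Maker, as second player, can keep the position in `P`, passing if
he likes, and that every position in `P` leaves him some winning set. -/
structure IsStrategy (X : Finset α) (F : Set (Finset α)) (P : Finset α → Finset α → Prop) :
    Prop where
  exists_subset : ∀ {M B}, P M B → ∃ A ∈ F, A ⊆ M ∪ X \ B
  pass_or_respond : ∀ {M B}, P M B → ∀ f ∈ X, f ∉ M → f ∉ B →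
    P M (insert f B) ∨ ∃ g ∈ X, g ∉ insert f B ∧ P (insert g M) (insert f B)

/- Extra elements never hurt Maker. His true position `M'` may run ahead of `M`, so that he can
claim anything when the strategy passes or when he already owns its answer. -/
theorem of_isStrategy {P : Finset α → Finset α → Prop} (hP : IsStrategy X F P) {M' : Finset α}
    (h : P M B) (hM : M ⊆ M') : MakerWins X F t M' B := by
  induction hk : (X \ (M' ∪ B)).card using Nat.strong_induction_on generalizing t M M' B with
  | _ k ih =>
    subst hk
    have card_lt {f N C} (hf : f ∈ X \ (M' ∪ B)) (hN : M' ⊆ N) (hC : B ⊆ C) (hfNC : f ∈ N ∪ C) :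
        (X \ (N ∪ C)).card < (X \ (M' ∪ B)).card :=
      Finset.card_lt_card <| (Finset.ssubset_iff_of_subset (by gcongr)).2 ⟨f, hf, by grind⟩
    by_cases hfull : X \ (M' ∪ B) = ∅
    · obtain ⟨A, hA, hAM⟩ := hP.exists_subset h
      exact .claim A hA (by grind)
    obtain ⟨e, he⟩ := Finset.nonempty_iff_ne_empty.2 hfull
    cases t with
    | true =>
      exact .makerMove e (by grind) (by grind) (by grind)
        (ih _ (card_lt he (by grind) subset_rfl (by grind)) h (by grind) rfl)
    | false =>
      refine .breakerMove e (by grind) (by grind) (by grind) fun f hfX hfM hfB => ?_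
      have hf : f ∈ X \ (M' ∪ B) := by grind
      obtain hpass | ⟨g, hgX, hgB, hrespond⟩ := hP.pass_or_respond h f hfX (by grind) hfB
      · exact ih _ (card_lt hf subset_rfl (by grind) (by grind)) hpass hM rfl
      by_cases hgM : g ∈ M'
      · exact ih _ (card_lt hf subset_rfl (by grind) (by grind)) hrespond (by grind) rfl
      · exact .makerMove g hgX hgM hgB
          (ih _ (card_lt hf (by grind) (by grind) (by grind)) hrespond (by grind) rfl)

theorem transfer (h : MakerWins X F false M B) (i : α ↪ β) {X' M' B' : Finset β}
    {F' : Set (Finset β)} (hX : X.map i ⊆ X') (hM : M.map i ⊆ M')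
    (hB : ∀ x ∈ X, i x ∈ B' → x ∈ B)
    (hF : ∀ A ∈ F, ∃ A' ∈ F', A' ⊆ M' ∪ A.map i) : MakerWins X' F' t M' B' := by
  let P (M₁ B₁ : Finset β) : Prop := ∃ M B, MakerWins X F false M B ∧ M' ∪ M.map i ⊆ M₁ ∧
    ∀ x ∈ X, i x ∈ B₁ → x ∈ B
  refine of_isStrategy (P := P) ⟨?_, ?_⟩ ⟨M, B, h, Finset.union_subset subset_rfl hM, hB⟩ subset_rfl
  · rintro M₁ B₁ ⟨M, B, h, hM, hB⟩
    obtain ⟨A, hA, hAM⟩ := h.exists_subset_union_sdiff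
    obtain ⟨A', hA', hAA'⟩ := hF A hA
    refine ⟨A', hA', hAA'.trans (Finset.union_subset (by grind) fun y hy => ?_)⟩
    grind
  · rintro M₁ B₁ ⟨M, B, h, hM, hB⟩ f hfX hfM hfB
    by_cases hf : ∃ x ∈ X, x ∉ B ∧ i x = f
    · obtain ⟨x, hxX, hxB, rfl⟩ := hf
      obtain hpass | ⟨g, hgX, hgB, hrespond⟩ := h.pass_or_respond hxX (by grind) hxB
      · exact .inl ⟨M, insert x B, hpass, hM, by grind [i.injective.eq_iff]⟩
      · exact .inr ⟨i g, by grind, by grind [i.injective.eq_iff], insert g M, insert x B, hrespond,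
          by grind, by grind [i.injective.eq_iff]⟩
    · exact .inl ⟨M, B, h, hM, by grind⟩

theorem disjSum {X₁ M₁ B₁ : Finset α} {F₁ : Set (Finset α)} {X₂ M₂ B₂ : Finset β}
    {F₂ : Set (Finset β)} (h₁ : MakerWins X₁ F₁ false M₁ B₁) (h₂ : MakerWins X₂ F₂ false M₂ B₂) :
    MakerWins (X₁.disjSum X₂) (Set.image2 Finset.disjSum F₁ F₂) t (M₁.disjSum M₂)
      (B₁.disjSum B₂) := by
  let P (M B : Finset (α ⊕ β)) : Prop :=
    MakerWins X₁ F₁ false M.toLeft B.toLeft ∧ MakerWins X₂ F₂ false M.toRight B.toRight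
  refine of_isStrategy (P := P) ⟨?_, ?_⟩ ⟨by simpa, by simpa⟩ subset_rfl
  · rintro M B ⟨h₁, h₂⟩
    obtain ⟨A₁, hA₁, hAM₁⟩ := h₁.exists_subset_union_sdiff
    obtain ⟨A₂, hA₂, hAM₂⟩ := h₂.exists_subset_union_sdiff
    refine ⟨_, Set.mem_image2_of_mem hA₁ hA₂, ?_⟩
    rintro (x | x) hx
    · simpa using hAM₁ (Finset.inl_mem_disjSum.1 hx)
    · simpa using hAM₂ (Finset.inr_mem_disjSum.1 hx)
  · rintro M B ⟨h₁, h₂⟩ (f | f) hfX hfM hfB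
    · obtain hpass | ⟨g, hgX, hgB, hrespond⟩ :=
        h₁.pass_or_respond (by simpa using hfX) (by simpa using hfM) (by simpa using hfB)
      · exact .inl ⟨by simpa, by simpa⟩
      · exact .inr ⟨.inl g, by simpa, by simpa using hgB, by simpa, by simpa⟩
    · obtain hpass | ⟨g, hgX, hgB, hrespond⟩ :=
        h₂.pass_or_respond (by simpa using hfX) (by simpa using hfM) (by simpa using hfB)
      · exact .inl ⟨by simpa, by simpa⟩
      · exact .inr ⟨.inr g, by simpa, by simpa using hgB, by simpa, by simpa⟩

theorem of_pairing {ι : Type} [Fintype ι] (p : ι × Bool ↪ α) (hX : ∀ i, p i ∈ X)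
    (hB : ∀ i s, p (i, s) ∈ B → p (i, !s) ∈ M)
    (hF : ∀ s : ι → Bool, ∃ A ∈ F, A ⊆ M ∪ Finset.univ.image fun i => p (i, s i)) :
    MakerWins X F t M B := by
  let P (M₁ B₁ : Finset α) : Prop := M ⊆ M₁ ∧ ∀ i s, p (i, s) ∈ B₁ → p (i, !s) ∈ M₁
  refine of_isStrategy (P := P) ⟨?_, ?_⟩ ⟨subset_rfl, hB⟩ subset_rfl
  · rintro M₁ B₁ ⟨hM, hB⟩
    have hfree : ∀ i, ∃ s, p (i, s) ∈ M₁ ∪ X \ B₁ := fun i => by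
      by_cases hi : p (i, true) ∈ B₁
      · exact ⟨false, by grind⟩
      · exact ⟨true, by grind⟩
    choose s hs using hfree
    obtain ⟨A, hA, hAM⟩ := hF s
    exact ⟨A, hA, hAM.trans (by grind)⟩
  · rintro M₁ B₁ ⟨hM, hB⟩ f hfX hfM hfB
    by_cases hf : ∃ i s, p (i, s) = f
    · obtain ⟨i, s, rfl⟩ := hf
      refine .inr ⟨p (i, !s), hX _, ?_, by grind, ?_⟩
      · grind [p.injective.eq_iff]
      · intro j r hj
        grind [p.injective.eq_iff]
    · exact .inl ⟨hM, by grind⟩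

theorem exists_two_mul_card_add_card_le (h : MakerWins X F t M B) (hM : M ⊆ X) (hB : B ⊆ X)
    (hMB : Disjoint M B) : ∃ A ∈ F, 2 * A.card + B.card ≤ X.card + M.card + t.toNat := by
  induction h with
  | @claim t M B A hA hAM =>
    have hAcard := Finset.card_le_card hAM
    have hMBcard := Finset.card_le_card (Finset.union_subset hM hB)
    rw [Finset.card_union_of_disjoint hMB] at hMBcard
    exact ⟨A, hA, by omega⟩
  | makerMove e he heM heB _ ih =>
    obtain ⟨A, hA, hcard⟩ := ih (by grind) hB (by simp [heB, hMB])
    rw [Finset.card_insert_of_notMem heM, Bool.toNat_false] at hcard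
    exact ⟨A, hA, by rw [Bool.toNat_true]; omega⟩
  | breakerMove e he heM heB _ ih =>
    obtain ⟨A, hA, hcard⟩ := ih e he heM heB hM (by grind) (by simp [heM, hMB])
    rw [Finset.card_insert_of_notMem heB, Bool.toNat_true] at hcard
    exact ⟨A, hA, by rw [Bool.toNat_false]; omega⟩

end Strategies
end MakerWins

section Linking

/-- Winning sets of the linking game, in which Maker owns an edge `uv` outside `V` and fights for
the edges from `u` and `v` to `V`. The element `(x, b)` of the board stands for the edge from `x` to
`u` if `b = true`, and to `v` if `b = false`. Maker has to link all but two vertices of `V` to `u`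
or `v`, and each of `u`, `v` to two vertices of `V`. -/
def LinkingSets (V : Type*) : Set (Finset (V × Bool)) :=
  {A | (∃ d d', ∀ x, x ≠ d → x ≠ d' → ∃ b, (x, b) ∈ A) ∧
    ∀ b, ∃ x y, x ≠ y ∧ (x, b) ∈ A ∧ (y, b) ∈ A}

instance {V : Type*} [Fintype V] [DecidableEq V] (A : Finset (V × Bool)) :
    Decidable (A ∈ LinkingSets V) := by
  unfold LinkingSets
  infer_instance

/-- In the position `(M, B)` of the linking game Maker can claim `g` and from then on answer by the
disjoint pairs `{(x, c), (y, c)}` for `(x, y, c) = q i`. -/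
def IsPairingReply {V : Type*} [Fintype V] [DecidableEq V] (M B : Finset (V × Bool)) (g : V × Bool)
    {k : ℕ} (q : Fin k → V × V × Bool) : Prop :=
  let p : Fin k × Bool → V × Bool := fun (i, s) => (bif s then (q i).1 else (q i).2.1, (q i).2.2)
  g ∉ M ∪ B ∧ p.Injective ∧ (∀ i s, p (i, s) ∈ B → p (i, !s) ∈ insert g M) ∧
    ∀ s : Fin k → Bool, (insert g M ∪ Finset.univ.image fun i => p (i, s i)) ∈ LinkingSets V

instance {V : Type*} [Fintype V] [DecidableEq V] (M B : Finset (V × Bool)) (g : V × Bool)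
    {k : ℕ} (q : Fin k → V × V × Bool) : Decidable (IsPairingReply M B g q) := by
  unfold IsPairingReply
  infer_instance

theorem IsPairingReply.makerWins {V : Type} [Fintype V] [DecidableEq V] {M B : Finset (V × Bool)}
    {g : V × Bool} {k : ℕ} {q : Fin k → V × V × Bool} (h : IsPairingReply M B g q) :
    MakerWins Finset.univ (LinkingSets V) true M B := by
  obtain ⟨hg, hp, hB, hF⟩ := h
  exact .makerMove g (by simp) (by grind) (by grind) <|
    .of_pairing ⟨_, hp⟩ (by simp) hB fun s => ⟨_, hF s, subset_rfl⟩

open Equiv in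
theorem makerWins_linkingSets_fin_five_of_link :
    MakerWins Finset.univ (LinkingSets (Fin 5)) false {(1, true)} {(0, false), (0, true)} := by
  -- The vertices `2, 3, 4` play the same role, and `swap 2 z` carries the answer for `z = 2` over.
  have reply_left : ∀ z : Fin 5, z ≠ 0 → z ≠ 1 →
      IsPairingReply {(1, true)} {(z, true), (0, false), (0, true)} (z, false)
        ![(1, swap 2 z 3, false), (swap 2 z 3, swap 2 z 4, true)] := by decide
  have reply_right : ∀ z : Fin 5, z ≠ 0 → z ≠ 1 →
      IsPairingReply {(1, true)} {(z, false), (0, false), (0, true)} (swap 2 z 3, false)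
        ![(1, swap 2 z 4, false), (z, swap 2 z 4, true)] := by decide
  have reply_right_one :
      IsPairingReply {((1 : Fin 5), true)} {(1, false), (0, false), (0, true)} (2, false)
        ![(2, 3, true), (3, 4, false)] := by decide
  refine .breakerMove (1, false) (by simp) (by simp) (by simp) fun ⟨z, c⟩ _ hM hB => ?_
  have hz0 : z ≠ 0 := by rintro rfl; cases c <;> simp at hB
  by_cases hz1 : z = 1
  · obtain ⟨rfl, rfl⟩ : z = 1 ∧ c = false := ⟨hz1, by grind⟩
    exact reply_right_one.makerWins
  cases c with
  | true => exact (reply_left z hz0 hz1).makerWins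
  | false => exact (reply_right z hz0 hz1).makerWins

open Equiv in
theorem makerWins_linkingSets_fin_five :
    MakerWins Finset.univ (LinkingSets (Fin 5)) false ∅ {(0, true)} := by
  -- The vertices `1, 2, 3, 4` play the same role: `swap 1 y` carries over the answer for `y = 1`.
  have reply_left : ∀ y : Fin 5, y ≠ 0 →
      IsPairingReply ∅ {(y, true), (0, true)} (swap 1 y 2, true)
        ![(0, y, false), (swap 1 y 2, swap 1 y 3, false), (swap 1 y 3, swap 1 y 4, true)] := by
    decide
  have reply_right : ∀ y : Fin 5, y ≠ 0 →
      IsPairingReply ∅ {(y, false), (0, true)} (0, false)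
        ![(y, swap 1 y 2, true), (swap 1 y 2, swap 1 y 3, false),
          (swap 1 y 3, swap 1 y 4, true)] := by
    decide
  refine .breakerMove (0, false) (by simp) (by simp) (by simp) fun ⟨y, b⟩ _ _ hB => ?_
  by_cases hy : y = 0
  · obtain ⟨rfl, rfl⟩ : y = 0 ∧ b = false := ⟨hy, by grind⟩
    exact .makerMove (1, true) (by simp) (by simp) (by simp) makerWins_linkingSets_fin_five_of_link
  cases b with
  | true => exact (reply_left y hy).makerWins
  | false => exact (reply_right y hy).makerWins

theorem MakerWins.linkingSets_map {V W : Type} [Fintype V] [DecidableEq V] [Fintype W]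
    [DecidableEq W] {M B : Finset (W × Bool)} (h : MakerWins Finset.univ (LinkingSets W) false M B)
    (f : W ↪ V) : MakerWins Finset.univ (LinkingSets V) false
      (M.map (f.prodMap (.refl Bool))) (B.map (f.prodMap (.refl Bool))) := by
  let i : (W × Bool) ⊕ ({x // x ∉ Set.range f} × Bool) ↪ V × Bool :=
    { toFun := Sum.elim (Prod.map f id) (Prod.map Subtype.val id)
      inj' := by
        rintro (⟨x, b⟩ | ⟨x, b⟩) (⟨y, c⟩ | ⟨y, c⟩) hxy <;> grind [f.injective.eq_iff] }
  have hpairing : MakerWins (Finset.univ : Finset ({x // x ∉ Set.range f} × Bool))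
      {A | ∀ x, ∃ b, (x, b) ∈ A} false ∅ ∅ :=
    .of_pairing (.refl _) (by simp) (by simp) fun s =>
      ⟨Finset.univ.image fun x => (x, s x), by simp, by simp⟩
  have hi : Function.Embedding.inl.trans i = f.prodMap (.refl Bool) := rfl
  refine (h.disjSum (t := false) hpairing).transfer i (Finset.subset_univ _) ?_ ?_ ?_
  · rw [Finset.disjSum_empty, Finset.map_map, hi]
  · rw [← hi, ← Finset.map_map, ← Finset.disjSum_empty]
    exact fun x _ => (Finset.mem_map' i).1
  · rintro _ ⟨A₁, ⟨⟨d, d', hcover⟩, hdeg⟩, A₂, hA₂, rfl⟩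
    refine ⟨(A₁.disjSum A₂).map i, ⟨⟨f d, f d', fun x hd hd' => ?_⟩, fun b => ?_⟩, by simp⟩
    · by_cases hx : x ∈ Set.range f
      · obtain ⟨y, rfl⟩ := hx
        obtain ⟨b, hb⟩ := hcover y (by grind) (by grind)
        exact ⟨b, Finset.mem_map.2 ⟨.inl (y, b), by simpa, rfl⟩⟩
      · obtain ⟨b, hb⟩ := hA₂ ⟨x, hx⟩
        exact ⟨b, Finset.mem_map.2 ⟨.inr (⟨x, hx⟩, b), by simpa, rfl⟩⟩
    · obtain ⟨x, y, hxy, hx, hy⟩ := hdeg b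
      exact ⟨f x, f y, f.injective.ne hxy, Finset.mem_map.2 ⟨.inl (x, b), by simpa, rfl⟩,
        Finset.mem_map.2 ⟨.inl (y, b), by simpa, rfl⟩⟩

theorem makerWins_linkingSets {V : Type} [Fintype V] [DecidableEq V] (hV : 5 ≤ Fintype.card V)
    (w : V) : MakerWins Finset.univ (LinkingSets V) false ∅ {(w, true)} := by
  obtain ⟨f⟩ : Nonempty (Fin 5 ↪ V) := Function.Embedding.nonempty_of_card_le (by simpa)
  simpa using
    makerWins_linkingSets_fin_five.linkingSets_map (f.trans (Equiv.swap (f 0) w).toEmbedding)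

end Linking

section CyclicOrder

open Equiv

variable {V : Type*} {σ : Perm V} {A : Finset (V × Bool)}

theorem mem_of_isCycleOn_univ [Finite V] (hσ : σ.IsCycleOn Set.univ) {U : Set V} {x : V}
    (hx : x ∈ U) (hU : ∀ y ∈ U, σ y ∈ U) (y : V) : y ∈ U := by
  obtain ⟨k, rfl⟩ := (hσ.2 (Set.mem_univ x) (Set.mem_univ y)).exists_nat_pow_eq
  induction k with
  | zero => exact hx
  | succ k ih => simpa [pow_succ'] using hU _ ih

theorem eq_or_eq_of_mem_linkingSets (hlink : A ∈ LinkingSets V) {x y z : V} (hxy : x ≠ y)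
    (hx : ∀ b, (x, b) ∉ A) (hy : ∀ b, (y, b) ∉ A) (hz : ∀ b, (z, b) ∉ A) : z = x ∨ z = y := by
  obtain ⟨⟨d, d', hcover⟩, -⟩ := hlink
  have hd : ∀ w, (∀ b, (w, b) ∉ A) → w = d ∨ w = d' := fun w hw => by
    by_contra! h
    obtain ⟨b, hb⟩ := hcover w h.1 h.2
    exact hw b hb
  have := hd x hx
  have := hd y hy
  have := hd z hz
  grind

theorem forall_notMem_apply (hA : ∀ b x, (x, b) ∈ A → (σ x, !b) ∉ A) {x : V} {b : Bool}
    (hx : (x, b) ∈ A) (hσx : (σ x, b) ∉ A) (c : Bool) : (σ x, c) ∉ A := by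
  have := hA b x hx
  cases b <;> cases c <;> assumption

theorem exists_mem_forall_notMem_apply [Finite V] (hσ : σ.IsCycleOn Set.univ)
    (hne : ∀ b, ∃ x, (x, b) ∈ A) (hA : ∀ b x, (x, b) ∈ A → (σ x, !b) ∉ A) (b : Bool) :
    ∃ x, (x, b) ∈ A ∧ ∀ c, (σ x, c) ∉ A := by
  by_contra! hclosed
  obtain ⟨x, hx⟩ := hne b
  obtain ⟨y, hy⟩ := hne (!b)
  have hall : ∀ z, (z, b) ∈ A := mem_of_isCycleOn_univ hσ (U := {z | (z, b) ∈ A}) hx fun z hz => by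
    by_contra hσz
    obtain ⟨c, hc⟩ := hclosed z hz
    exact forall_notMem_apply hA hz hσz c hc
  have := hA b (σ⁻¹ y) (hall _)
  simp_all

/- If `x = σ³ v` is linked by both `b`, then `σ² v` and `σ⁴ v` are the two unlinked vertices. Hence
`σ v` is linked by both `b` as well, for otherwise the vertices other than `x` that are linked by
`b` would be closed under `σ`. So `v` is unlinked too, and the cycle has length four. -/
theorem not_forall_mem_of_mem_linkingSets [Fintype V] (hσ : σ.IsCycleOn Set.univ)
    (hV : 5 ≤ Fintype.card V) (hlink : A ∈ LinkingSets V)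
    (hA : ∀ b x, (x, b) ∈ A → (σ x, !b) ∉ A) (x : V) : ¬ ∀ b, (x, b) ∈ A := by
  classical
  intro hx
  have not_mem_next : ∀ y, (∀ b, (y, b) ∈ A) → ∀ b, (σ y, b) ∉ A := fun y hy b => by
    simpa using hA (!b) y (hy _)
  have not_mem_prev : ∀ y, (∀ b, (σ y, b) ∈ A) → ∀ b, (y, b) ∉ A := fun y hy b hb =>
    hA b y hb (hy _)
  obtain ⟨v, rfl⟩ : ∃ v, σ (σ (σ v)) = x := (σ * σ * σ).surjective x
  have hcard : ∀ U : Finset V, v ∈ U → (∀ y ∈ U, σ y ∈ U) → 5 ≤ U.card := fun U hv hU => by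
    rwa [Finset.eq_univ_iff_forall.2 (mem_of_isCycleOn_univ hσ (U := U) hv hU)]
  have hne : σ (σ (σ (σ v))) ≠ σ (σ v) := fun h => by
    have := hcard {v, σ v} (by simp) (by grind [σ.injective.eq_iff])
    grind
  have huncovered : ∀ y, (∀ b, (y, b) ∉ A) → y = σ (σ v) ∨ y = σ (σ (σ (σ v))) :=
    fun y => eq_or_eq_of_mem_linkingSets hlink hne.symm (not_mem_prev _ hx) (not_mem_next _ hx)
  have hσv : ∀ b, (σ v, b) ∈ A := fun b => by
    by_contra hb
    let U : Set V := {y | y ≠ σ (σ (σ v)) ∧ (y, b) ∈ A}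
    have hU : U.Nonempty := by
      obtain ⟨y, z, hyz, hy, hz⟩ := hlink.2 b
      by_cases h : y = σ (σ (σ v))
      · exact ⟨z, by grind, hz⟩
      · exact ⟨y, h, hy⟩
    have hσU : ∀ y ∈ U, σ y ∈ U := by
      refine fun y ⟨hyx, hyb⟩ => ⟨fun h => not_mem_prev _ hx b (σ.injective h ▸ hyb), ?_⟩
      by_contra hσy
      obtain h | h := huncovered (σ y) (forall_notMem_apply hA hyb hσy)
      · exact hb (σ.injective h ▸ hyb)
      · exact hyx (σ.injective h)
    exact (mem_of_isCycleOn_univ hσ hU.choose_spec hσU (σ (σ (σ v)))).1 rfl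
  have hperiod := huncovered v (not_mem_prev v hσv)
  have := hcard {v, σ v, σ (σ v), σ (σ (σ v))} (by simp) (by grind)
  have : Finset.card {v, σ v, σ (σ v), σ (σ (σ v))} ≤ 4 := Finset.card_le_four
  omega

/- Otherwise every vertex linked by `b` is followed by an unlinked one, and so is some vertex `z`
linked by `!b`. As only two vertices are unlinked, `z` is linked by both. -/
theorem exists_mem_apply_mem [Fintype V] (hσ : σ.IsCycleOn Set.univ)
    (hV : 5 ≤ Fintype.card V) (hlink : A ∈ LinkingSets V)
    (hA : ∀ b x, (x, b) ∈ A → (σ x, !b) ∉ A) (b : Bool) : ∃ x, (x, b) ∈ A ∧ (σ x, b) ∈ A := by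
  by_contra! hb
  have hne : ∀ c, ∃ x, (x, c) ∈ A := fun c => (hlink.2 c).imp fun x ⟨_, _, hx, _⟩ => hx
  obtain ⟨z, hz, hσz⟩ := exists_mem_forall_notMem_apply hσ hne hA (!b)
  obtain ⟨x, y, hxy, hx, hy⟩ := hlink.2 b
  have huncovered : ∀ x, (x, b) ∈ A → ∀ c, (σ x, c) ∉ A := fun x hx =>
    forall_notMem_apply hA hx (hb x hx)
  have hzxy : z = x ∨ z = y := by
    simpa using eq_or_eq_of_mem_linkingSets hlink (σ.injective.ne hxy) (huncovered x hx)
      (huncovered y hy) hσz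
  have hzb : (z, b) ∈ A := by grind
  exact not_forall_mem_of_mem_linkingSets hσ hV hlink hA z fun c => by
    cases b <;> cases c <;> assumption

end CyclicOrder

section Hamiltonian

open Equiv

variable {V W : Type*} {G : SimpleGraph V} {s : Set V} {σ : Perm V}

theorem isCycleOn_mul_swap [Finite V] [DecidableEq V] (hσ : σ.IsCycleOn s) {x z : V} (hx : x ∈ s)
    (hz : z ∉ s) (hσz : σ z = z) : (σ * swap x z).IsCycleOn (insert z s) := by
  have hτx : (σ * swap x z) x = z := by simpa
  have hτz : (σ * swap x z) z = σ x := by simp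
  have hτ : ∀ y, y ≠ x → y ≠ z → (σ * swap x z) y = σ y := fun y hyx hyz => by
    rw [Perm.mul_apply, swap_apply_of_ne_of_ne hyx hyz]
  generalize σ * swap x z = τ at *
  have hpow (k : ℕ) : τ.SameCycle x ((σ ^ k) x) := by
    induction k with
    | zero => exact .refl _ _
    | succ k ih =>
      have hk : (σ ^ k) x ∈ s := (hσ.1.perm_pow k).mapsTo hx
      rw [pow_succ', Perm.mul_apply]
      by_cases hkx : (σ ^ k) x = x
      · rw [hkx, ← hτz, Perm.sameCycle_apply_right, ← hτx, Perm.sameCycle_apply_right]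
      · rwa [← hτ _ hkx (by grind), Perm.sameCycle_apply_right]
  have hsame : ∀ y ∈ insert z s, τ.SameCycle x y := by
    rintro y (rfl | hy)
    · exact ⟨1, by simpa⟩
    obtain ⟨k, rfl⟩ := (hσ.2 hx hy).exists_nat_pow_eq
    exact hpow k
  refine ⟨⟨?_, τ.injective.injOn, ?_⟩, fun y hy y' hy' => (hsame y hy).symm.trans (hsame y' hy')⟩
  · rintro y (rfl | hy)
    · exact hτz ▸ .inr (hσ.1.mapsTo hx)
    by_cases hyx : y = x
    · exact hyx ▸ hτx ▸ .inl rfl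
    · exact hτ y hyx (by grind) ▸ .inr (hσ.1.mapsTo hy)
  · rintro y (rfl | hy)
    · exact ⟨x, .inr hx, hτx⟩
    obtain ⟨y, hys, rfl⟩ := hσ.1.surjOn hy
    by_cases hyx : y = x
    · exact ⟨z, .inl rfl, hyx ▸ hτz⟩
    · exact ⟨y, .inr hys, hτ y hyx (by grind)⟩

/-- `IsTour G s σ` says that `σ` is the successor map of a closed tour in `G` visiting each vertex
of `s` once and no other vertex. A tour of two vertices runs back and forth along an edge. -/
structure IsTour (G : SimpleGraph V) (s : Set V) (σ : Perm V) : Prop where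
  isCycleOn : σ.IsCycleOn s
  adj_apply : ∀ x ∈ s, G.Adj x (σ x)
  apply_eq_self : ∀ x ∉ s, σ x = x

namespace IsTour

theorem map (h : IsTour G s σ) {G' : SimpleGraph W} (f : V ↪ W)
    (hf : ∀ x y, G.Adj x y → G'.Adj (f x) (f y)) :
    IsTour G' (f '' s) (σ.viaEmbedding f) where
  isCycleOn := by
    classical
    exact h.isCycleOn.extendDomain (.ofInjective f f.injective)
  adj_apply := by
    rintro _ ⟨x, hx, rfl⟩
    rw [Perm.viaEmbedding_apply]
    exact hf _ _ (h.adj_apply x hx)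
  apply_eq_self y hy := by
    by_cases hyf : y ∈ Set.range f
    · obtain ⟨x, rfl⟩ := hyf
      rw [Perm.viaEmbedding_apply, h.apply_eq_self x (by grind)]
    · exact Perm.viaEmbedding_apply_of_notMem _ _ _ hyf

theorem mul_swap [Finite V] [DecidableEq V] (h : IsTour G s σ) {x z : V} (hx : x ∈ s) (hz : z ∉ s)
    (hxz : G.Adj x z) (hzx : G.Adj z (σ x)) : IsTour G (insert z s) (σ * swap x z) where
  isCycleOn := isCycleOn_mul_swap h.isCycleOn hx hz (h.apply_eq_self z hz)
  adj_apply y hy := by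
    by_cases hyx : y = x
    · simpa [hyx, h.apply_eq_self z hz]
    by_cases hyz : y = z
    · simpa [hyz]
    rw [Perm.mul_apply, swap_apply_of_ne_of_ne hyx hyz]
    exact h.adj_apply y (hy.resolve_left hyz)
  apply_eq_self y hy := by
    rw [Perm.mul_apply, swap_apply_of_ne_of_ne (by grind) (by grind), h.apply_eq_self y (by grind)]

theorem mul_swap_mul_swap [Finite V] [DecidableEq V] (h : IsTour G s σ) {x z z' : V} (hx : x ∈ s)
    (hz : z ∉ s) (hz' : z' ∉ s) (hxz : G.Adj x z) (hzz' : G.Adj z z') (hzx : G.Adj z' (σ x)) :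
    IsTour G (insert z' (insert z s)) (σ * swap x z * swap z z') := by
  have hσz : σ z = z := h.apply_eq_self z hz
  have hσz' : σ z' = z' := h.apply_eq_self z' hz'
  have hx' : x ≠ z' := by grind
  have hτ : ∀ y, y ≠ x → y ≠ z → y ≠ z' → (σ * swap x z * swap z z') y = σ y :=
    fun y hyx hyz hyz' => by
      rw [Perm.mul_apply, swap_apply_of_ne_of_ne hyz hyz', Perm.mul_apply,
        swap_apply_of_ne_of_ne hyx hyz]
  refine ⟨?_, fun y hy => ?_, fun y hy => ?_⟩
  · refine isCycleOn_mul_swap (isCycleOn_mul_swap h.isCycleOn hx hz hσz) (.inl rfl)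
      (by simp [hz', hzz'.ne.symm]) ?_
    rw [Perm.mul_apply, swap_apply_of_ne_of_ne hx'.symm hzz'.ne.symm, hσz']
  · by_cases hyx : y = x
    · simpa [hyx, swap_apply_of_ne_of_ne hxz.ne hx', hσz]
    by_cases hyz : y = z
    · simpa [hyz, swap_apply_of_ne_of_ne hx'.symm hzz'.ne.symm, hσz']
    by_cases hyz' : y = z'
    · simpa [hyz']
    rw [hτ y hyx hyz hyz']
    exact h.adj_apply y (by grind)
  · rw [hτ y (by grind) (by grind) (by grind), h.apply_eq_self y (by grind)]

end IsTour

theorem isTour_finRotate (n : ℕ) :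
    IsTour (SimpleGraph.cycleGraph (n + 2)) Set.univ (finRotate (n + 2)) where
  isCycleOn := by
    convert (isCycle_finRotate (n := n)).isCycleOn
    simp
  adj_apply i _ := by simp [SimpleGraph.cycleGraph_adj]
  apply_eq_self := by simp

variable [Fintype V] [DecidableEq V]

theorem isHamiltonian_iff_cycleGraph_isContained (hV : 3 ≤ Fintype.card V) :
    G.IsHamiltonian ↔ (SimpleGraph.cycleGraph (Fintype.card V)).IsContained G := by
  rw [SimpleGraph.cycleGraph_isContained_iff hV, SimpleGraph.IsHamiltonian]
  simp only [SimpleGraph.Walk.isHamiltonianCycle_iff_isCycle_and_length_eq]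
  exact ⟨fun h => h (by omega), fun h _ => h⟩

theorem IsTour.isHamiltonian (h : IsTour G Set.univ σ) (hV : 3 ≤ Fintype.card V) :
    G.IsHamiltonian := by
  obtain ⟨n, hn⟩ := Nat.exists_eq_add_of_le' hV
  obtain ⟨a⟩ : Nonempty V := Fintype.card_pos_iff.1 (by omega)
  have hpow (i j : ℕ) : (σ ^ i) a = (σ ^ j) a ↔ i ≡ j [MOD n + 3] := by
    rw [← hn]
    exact (Finset.coe_univ (α := V) ▸ h.isCycleOn).pow_apply_eq_pow_apply (Finset.mem_univ a)
  have hadj (i : Fin (n + 3)) : G.Adj ((σ ^ (i : ℕ)) a) ((σ ^ ((i + 1 : Fin (n + 3)) : ℕ)) a) := by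
    have : (σ ^ ((i + 1 : Fin (n + 3)) : ℕ)) a = (σ ^ (i + 1 : ℕ)) a := by
      rw [hpow, Fin.val_add]
      exact Nat.mod_modEq _ _
    rw [this, pow_succ', Perm.mul_apply]
    exact h.adj_apply _ (Set.mem_univ _)
  rw [isHamiltonian_iff_cycleGraph_isContained hV, hn]
  refine ⟨⟨⟨fun i => (σ ^ (i : ℕ)) a, fun {i j} hij => ?_⟩, fun i j hij => ?_⟩⟩
  · rw [SimpleGraph.cycleGraph_adj, sub_eq_iff_eq_add', sub_eq_iff_eq_add'] at hij
    obtain rfl | rfl := hij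
    · exact (hadj j).symm
    · exact hadj i
  · exact Fin.ext (((hpow i j).1 hij).eq_of_lt_of_lt i.2 j.2)

theorem exists_isTour_of_isHamiltonian (h : G.IsHamiltonian) (hV : 3 ≤ Fintype.card V) :
    ∃ σ, IsTour G Set.univ σ := by
  obtain ⟨n, hn⟩ := Nat.exists_eq_add_of_le' hV
  rw [isHamiltonian_iff_cycleGraph_isContained hV, hn] at h
  obtain ⟨f⟩ := h
  let e : Fin (n + 3) ↪ V := ⟨f, f.injective⟩
  have he : Set.range e = Set.univ :=
    (((Fintype.bijective_iff_injective_and_card e).2 ⟨e.injective, by simp [hn]⟩).2).range_eq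
  refine ⟨(finRotate _).viaEmbedding e, ?_⟩
  simpa [he] using (isTour_finRotate (n + 1)).map e fun _ _ => f.toHom.map_adj

end Hamiltonian

section Extension

theorem exists_isTour_of_mem_linkingSets {V W : Type*} [Fintype V] [Finite W]
    {G : SimpleGraph W} {f : V ↪ W} {u : Bool → W} {σ : Equiv.Perm V}
    (hσ : IsTour (G.comap f) Set.univ σ) (hV : 5 ≤ Fintype.card V) (hu : ∀ b, u b ∉ Set.range f)
    (huu : ∀ b, G.Adj (u b) (u !b)) {A : Finset (V × Bool)} (hA : A ∈ LinkingSets V)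
    (hadj : ∀ x b, (x, b) ∈ A → G.Adj (f x) (u b)) :
    ∃ b τ, IsTour G (insert (u !b) (insert (u b) (Set.range f))) τ := by
  classical
  have hτ : IsTour G (Set.range f) (σ.viaEmbedding f) := by
    simpa using hσ.map (G' := G) f fun _ _ h => h
  have hτf : ∀ x, σ.viaEmbedding f (f x) = f (σ x) := Equiv.Perm.viaEmbedding_apply σ f
  generalize σ.viaEmbedding f = τ at hτ hτf
  have hmem (x : V) : f x ∈ Set.range f := ⟨x, rfl⟩
  have hadj_apply (x : V) (b : Bool) (hx : (σ x, b) ∈ A) : G.Adj (u b) (τ (f x)) :=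
    hτf x ▸ (hadj (σ x) b hx).symm
  by_cases hmixed : ∃ b x, (x, b) ∈ A ∧ (σ x, !b) ∈ A
  · obtain ⟨b, x, hx, hσx⟩ := hmixed
    exact ⟨b, _, hτ.mul_swap_mul_swap (hmem x) (hu b) (hu !b) (hadj x b hx) (huu b)
      (hadj_apply x _ hσx)⟩
  · push Not at hmixed
    obtain ⟨x, hx, hσx⟩ := exists_mem_apply_mem hσ.isCycleOn hV hA hmixed true
    obtain ⟨y, hy, hσy⟩ := exists_mem_apply_mem hσ.isCycleOn hV hA hmixed false
    have hyx : y ≠ x := by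
      rintro rfl
      exact hmixed true y hx hσy
    have hτ' := hτ.mul_swap (hmem x) (hu true) (hadj x true hx) (hadj_apply x _ hσx)
    have hτ'y : (τ * Equiv.swap (f x) (u true)) (f y) = τ (f y) := by
      rw [Equiv.Perm.mul_apply,
        Equiv.swap_apply_of_ne_of_ne (f.injective.ne hyx) fun h => hu true ⟨y, h⟩]
    have hfalse : u false ∉ insert (u true) (Set.range f) := fun h =>
      h.elim (huu true).ne.symm (hu false)
    exact ⟨true, _, hτ'.mul_swap (.inr (hmem y)) hfalse (hadj y false hy)
      (hτ'y ▸ hadj_apply y _ hσy)⟩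

theorem isHamiltonian_of_mem_linkingSets {V W : Type*} [Fintype V] [DecidableEq V] [Fintype W]
    [DecidableEq W] {G : SimpleGraph W} (e : V ⊕ Bool ≃ W) (hV : 5 ≤ Fintype.card V)
    (hG : (G.comap (e ∘ Sum.inl)).IsHamiltonian) (huv : G.Adj (e (.inr true)) (e (.inr false)))
    {A : Finset (V × Bool)} (hA : A ∈ LinkingSets V)
    (hadj : ∀ x b, (x, b) ∈ A → G.Adj (e (.inl x)) (e (.inr b))) : G.IsHamiltonian := by
  obtain ⟨σ, hσ⟩ := exists_isTour_of_isHamiltonian hG (by omega)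
  obtain ⟨b, τ, hτ⟩ := exists_isTour_of_mem_linkingSets
    (f := Function.Embedding.inl.trans e.toEmbedding) (u := e ∘ Sum.inr) hσ hV (by simp)
    (Bool.forall_bool.2 ⟨huv.symm, huv⟩) hA hadj
  have hall : insert (e (.inr !b)) (insert (e (.inr b)) (Set.range (e ∘ Sum.inl))) = Set.univ := by
    rw [Set.eq_univ_iff_forall, e.surjective.forall]
    rintro (x | c)
    · exact .inr (.inr ⟨x, rfl⟩)
    · cases b <;> cases c <;> simp
  have hW : Fintype.card W = Fintype.card V + 2 := by
    rw [← Fintype.card_congr e, Fintype.card_sum, Fintype.card_bool]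
  exact (hall ▸ hτ : IsTour G Set.univ τ).isHamiltonian (by omega)

theorem isHamiltonian_fromEdgeSet_of_mem_hamCycles {n : ℕ} {H : Finset (Sym2 (Fin n))}
    (hH : H ∈ HamCycles n) : (SimpleGraph.fromEdgeSet (H : Set (Sym2 (Fin n)))).IsHamiltonian := by
  obtain ⟨a, p, hp, rfl⟩ := hH
  have hedges : ∀ e ∈ p.edges, e ∈ (SimpleGraph.fromEdgeSet
      (p.edges.toFinset : Set (Sym2 (Fin n)))).edgeSet := fun e he => by
    simpa [he] using SimpleGraph.not_isDiag_of_mem_edgeSet _ (p.edges_subset_edgeSet he)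
  intro _
  refine ⟨a, p.transfer _ hedges, ?_⟩
  rw [SimpleGraph.Walk.isHamiltonianCycle_iff_isCycle_and_length_eq] at hp ⊢
  exact ⟨hp.1.transfer hedges, by simpa using hp.2⟩

theorem exists_mem_hamCycles_subset {n : ℕ} (hn : n ≠ 1) {A : Finset (Sym2 (Fin n))}
    (hA : (SimpleGraph.fromEdgeSet (A : Set (Sym2 (Fin n)))).IsHamiltonian) :
    ∃ H ∈ HamCycles n, H ⊆ A := by
  obtain ⟨a, p, hp⟩ := hA (by simpa)
  refine ⟨_, ⟨a, p.mapLe le_top, hp.map Function.bijective_id, rfl⟩, fun e he => ?_⟩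
  have hmem := p.edges_subset_edgeSet (e := e) (by simpa using he)
  rw [SimpleGraph.edgeSet_fromEdgeSet] at hmem
  exact hmem.1

theorem five_le_of_makerWinsSecond {n : ℕ} (h : MakerWinsSecond (Board n) (HamCycles n)) :
    5 ≤ n := by
  obtain ⟨_, ⟨a, p, hp, rfl⟩, hcard⟩ :=
    h.exists_two_mul_card_add_card_le (by simp) (by simp) (by simp)
  have hlength : p.length = n := by simpa using hp.length_eq
  have hn : 3 ≤ n := hlength ▸ hp.isCycle.three_le_length
  have hedges : 2 * n ≤ n.choose 2 := by
    rw [Board, SimpleGraph.card_edgeFinset_top_eq_card_choose_two,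
      List.toFinset_card_of_nodup hp.isCycle.isTrail.edges_nodup] at hcard
    simpa [hlength] using hcard
  by_contra! hlt
  interval_cases n <;> revert hedges <;> decide

theorem exists_equiv_apply_eq {α β : Type*} [Fintype α] [Fintype β]
    (h : Fintype.card α = Fintype.card β) {x y : α} (hxy : x ≠ y) {a b : β} (hab : a ≠ b) :
    ∃ e : α ≃ β, e x = a ∧ e y = b := by
  let e := Fintype.equivOfCardEq h
  obtain ⟨g, hx, hy⟩ := MulAction.is_two_pretransitive_iff.1
    (Equiv.Perm.isMultiplyPretransitive β 2) (e.injective.ne hxy) hab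
  exact ⟨e.trans g, hx, hy⟩

/-- If `W` consists of `V` and two further vertices, this maps a pair in `V` to the corresponding
edge in `W`, and an element of the board of the linking game to the edge it stands for. -/
def edgeEmbedding {V W : Type*} (e : V ⊕ Bool ≃ W) : Sym2 V ⊕ (V × Bool) ↪ Sym2 W where
  toFun := Sum.elim (Sym2.map (e ∘ .inl)) fun x => s(e (.inl x.1), e (.inr x.2))
  inj' := by
    refine .sumElim (Sym2.map.injective (e.injective.comp Sum.inl_injective)) ?_ ?_
    · rintro ⟨x, b⟩ ⟨y, c⟩ hxy
      simpa using hxy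
    · rintro x ⟨y, c⟩
      induction x with | _ a b => simp

@[simp]
theorem edgeEmbedding_inl {V W : Type*} (e : V ⊕ Bool ≃ W) (x y : V) :
    edgeEmbedding e (.inl s(x, y)) = s(e (.inl x), e (.inl y)) :=
  rfl

@[simp]
theorem edgeEmbedding_inr {V W : Type*} (e : V ⊕ Bool ≃ W) (x : V) (b : Bool) :
    edgeEmbedding e (.inr (x, b)) = s(e (.inl x), e (.inr b)) :=
  rfl

theorem makerWins_hamCycles_add_two {n : ℕ} (h : MakerWinsSecond (Board n) (HamCycles n))
    (e : Fin n ⊕ Bool ≃ Fin (n + 2)) (w : Fin n) :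
    MakerWins (Board (n + 2)) (HamCycles (n + 2)) false {s(e (.inr true), e (.inr false))}
      {s(e (.inl w), e (.inr true))} := by
  have hn : 5 ≤ Fintype.card (Fin n) := by simpa using five_le_of_makerWinsSecond h
  refine (MakerWins.disjSum h (makerWins_linkingSets hn w) (t := false)).transfer
    (edgeEmbedding e) ?_ (by simp) ?_ ?_
  · intro f hf
    obtain ⟨x | ⟨x, b⟩, hx, rfl⟩ := Finset.mem_map.1 hf
    · induction x with | _ x y => simpa [Board] using hx
    · simp [Board]
  · rintro (x | ⟨x, b⟩) hx
    · induction x with | _ x y => simp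
    · simp
  · rintro _ ⟨A₁, hA₁, A₂, hA₂, rfl⟩
    refine exists_mem_hamCycles_subset (by omega) ?_
    refine isHamiltonian_of_mem_linkingSets e hn ?_ (by simp) hA₂ fun x b hx => ?_
    · refine (isHamiltonian_fromEdgeSet_of_mem_hamCycles hA₁).mono fun x y hxy => ?_
      have hmem : .inl s(x, y) ∈ A₁.disjSum A₂ := Finset.inl_mem_disjSum.2 hxy.1
      exact ⟨Finset.mem_union_right _ (Finset.mem_map_of_mem (edgeEmbedding e) hmem),
        by simpa using hxy.ne⟩
    · have hmem : .inr (x, b) ∈ A₁.disjSum A₂ := Finset.inr_mem_disjSum.2 hx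
      exact ⟨Finset.mem_union_right _ (Finset.mem_map_of_mem (edgeEmbedding e) hmem), by simp⟩

end Extension

/-- If Maker, as second player, wins the Hamiltonicity game on `K_n`,
then he also wins it, as second player, on `K_{n+2}`. -/
theorem hamiltonicity_induction_step (n : ℕ)
    (h : MakerWinsSecond (Board n) (HamCycles n)) :
    MakerWinsSecond (Board (n + 2)) (HamCycles (n + 2)) := by
  have : NeZero n := ⟨by have := five_le_of_makerWinsSecond h; omega⟩
  refine .breakerMove s(0, 1) (by simp [Board]) (by simp) (by simp) fun f hf _ _ => ?_
  induction f with | _ a b =>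
  have hab : a ≠ b := by simpa [Board] using hf
  obtain ⟨e, rfl, rfl⟩ := exists_equiv_apply_eq (α := Fin n ⊕ Bool) (by simp)
    (x := .inr true) (y := .inl 0) (by simp) hab
  exact .makerMove s(e (.inr true), e (.inr false)) (by simp [Board]) (by simp) (by simp)
    (by simpa [Sym2.eq_swap] using makerWins_hamCycles_add_two h e 0)
end

section
/- In the Maker-Breaker Hamiltonian Path game on E(K_n), Maker has a winning strategy (regardless of which player moves first) if and only if n ≥ 5, for all n ≥ 4. -/
/-!
On five and on six vertices Maker, moving second, follows a pairing of edges each of whose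
transversals contains a spanning path, as a check of the `2 ^ 5`, respectively `2 ^ 7`, transversals
shows. From `n` to `n + 2` vertices, let `xu` be Breaker's first edge. Maker claims `uv` for a third
vertex `v`, builds a spanning path of the vertices other than `u` and `v` inductively, and pairs
`yu` with `yv` for every `y ≠ x`. The path has an end `y ≠ x`, so it extends through `uv` by the
edge that Maker has obtained from the pair of `y`.

On four vertices Breaker, moving first, obtains two edges `ab` and `ac` at a common vertex such that
`ad` and `bc` are still free. Every spanning path that avoids `ab` and `ac` starts with `ad` and
hence uses `bc`, so Maker needs both of these edges while only one is within reach.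
-/

open scoped SetFamily

section Game

variable {α ι : Type} [DecidableEq α] {X X' Y : Finset α} {F F' G : Set (Finset α)}
  {M M' B B' : Finset α} {t t' : Bool}

namespace MakerWins

theorem after_breaker_move (h : MakerWins X F false M B) {f : α} (hf : f ∈ X) (hfM : f ∉ M)
    (hfB : f ∉ B) : MakerWins X F true M (insert f B) := by
  cases h with
  | claim A hA hAM => exact .claim A hA hAM
  | breakerMove _ _ _ _ h => exact h f hf hfM hfB

theorem exists_maker_move (h : MakerWins X F true M B) (hfree : ∃ e ∈ X, e ∉ M ∧ e ∉ B) :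
    ∃ e ∈ X, e ∉ M ∧ e ∉ B ∧ MakerWins X F false (insert e M) B := by
  cases h with
  | claim A hA hAM =>
    obtain ⟨e, he, heM, heB⟩ := hfree
    exact ⟨e, he, heM, heB, .claim A hA (hAM.trans (Finset.subset_insert e M))⟩
  | makerMove e he heM heB h => exact ⟨e, he, heM, heB, h⟩

theorem of_forall_breaker_move (h : MakerWins X F true M B)
    (hmove : ∀ f ∈ X, f ∉ M → f ∉ B → MakerWins X F true M (insert f B)) :
    MakerWins X F false M B := by
  by_cases hfree : ∃ e ∈ X, e ∉ M ∧ e ∉ B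
  · obtain ⟨e, he, heM, heB⟩ := hfree
    exact .breakerMove e he heM heB hmove
  · cases h with
    | claim A hA hAM => exact .claim A hA hAM
    | makerMove e he heM heB _ => exact absurd ⟨e, he, heM, heB⟩ hfree

theorem mono (h : MakerWins X F t M B) (hX : X ⊆ X') (ht : t ≤ t') (hM : M ⊆ M')
    (hB : X ∩ B' ⊆ B) : MakerWins X' F t' M' B' := by
  induction h generalizing t' M' B' with
  | claim A hA hAM => exact .claim A hA (hAM.trans hM)
  | @makerMove M B e he _ heB _ ih =>
    obtain rfl : t' = true := top_le_iff.1 ht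
    by_cases heM' : e ∈ M'
    · exact ih (Bool.false_le _) (Finset.insert_subset heM' hM) hB
    · exact .makerMove e (hX he) heM' (fun heB' => heB (hB (Finset.mem_inter.2 ⟨he, heB'⟩)))
        (ih le_rfl (Finset.insert_subset_insert e hM) hB)
  | @breakerMove M B e he heM heB _ ih =>
    have hmaker {C : Finset α} (f : α) (hfX : f ∈ X) (hfM : f ∉ M) (hfB : f ∉ B)
        (hC : X ∩ C ⊆ insert f B) : MakerWins X' F true M' C := ih f hfX hfM hfB le_rfl hM hC
    have hpass {C : Finset α} (hC : X ∩ C ⊆ B) : MakerWins X' F true M' C :=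
      hmaker e he heM heB (hC.trans (Finset.subset_insert e B))
    cases t' with
    | true => exact hpass hB
    | false =>
      refine (hpass hB).of_forall_breaker_move fun g _ hgM' _ => ?_
      by_cases hg : g ∈ X ∧ g ∉ B
      · exact hmaker g hg.1 (fun hgM => hgM' (hM hgM)) hg.2 (by grind)
      · exact hpass (by grind)

theorem of_winning_imp (h : MakerWins X F t M B)
    (hF : ∀ N, M ⊆ N → (∃ A ∈ F, A ⊆ N) → ∃ A ∈ F', A ⊆ N) : MakerWins X F' t M B := by
  induction h with
  | @claim _ M _ A hA hAM =>
    obtain ⟨A', hA', hA'M⟩ := hF M subset_rfl ⟨A, hA, hAM⟩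
    exact .claim A' hA' hA'M
  | @makerMove M _ e he heM heB _ ih =>
    exact .makerMove e he heM heB (ih fun N hN => hF N ((Finset.subset_insert e M).trans hN))
  | breakerMove e he heM heB _ ih =>
    exact .breakerMove e he heM heB fun f hf hfM hfB => ih f hf hfM hfB hF

theorem sups_of_claimed (h : MakerWins Y G t M B) {A : Finset α} (hA : A ∈ F) (hAM : A ⊆ M)
    (hY : Y ⊆ X) : MakerWins X (F ⊻ G) t M B :=
  (h.mono hY le_rfl subset_rfl Finset.inter_subset_right).of_winning_imp
    fun _ hN ⟨C, hC, hCN⟩ =>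
      ⟨A ∪ C, Set.sup_mem_sups hA hC, Finset.union_subset (hAM.trans hN) hCN⟩

theorem sups (hXY : Disjoint X Y) (hF : MakerWins X F t M B) (hG : MakerWins Y G false M B) :
    MakerWins (X ∪ Y) (F ⊻ G) t M B := by
  -- Induct on the number of free elements: after a move of Breaker in `Y`, the boards `X` and `Y`
  -- exchange their roles, so structural induction on `hF` is not available.
  induction hn : ((X ∪ Y) \ (M ∪ B)).card using Nat.strong_induction_on
    generalizing X Y F G t M B with | _ n ih
  subst hn
  have hcard {e : α} (he : e ∈ X ∪ Y) (heM : e ∉ M) (heB : e ∉ B) :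
      ((X ∪ Y) \ insert e (M ∪ B)).card < ((X ∪ Y) \ (M ∪ B)).card := by
    rw [Finset.sdiff_insert]
    exact Finset.card_erase_lt_of_mem (by simp [*])
  cases hF with
  | claim A hA hAM => exact (hG.mono subset_rfl (Bool.false_le t) subset_rfl
      Finset.inter_subset_right).sups_of_claimed hA hAM Finset.subset_union_right
  | makerMove e he heM heB hF =>
    have heXY : e ∈ X ∪ Y := Finset.mem_union_left Y he
    have hG : MakerWins Y G false (insert e M) B :=
      hG.mono subset_rfl le_rfl (Finset.subset_insert e M) Finset.inter_subset_right
    exact .makerMove e heXY heM heB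
      (ih _ (by simpa only [Finset.insert_union] using hcard heXY heM heB) hXY hF hG rfl)
  | breakerMove e he heM heB hF =>
    refine .breakerMove e (Finset.mem_union_left Y he) heM heB fun f hf hfM hfB => ?_
    have hlt := hcard hf hfM hfB
    rw [← Finset.union_insert] at hlt
    rcases Finset.mem_union.1 hf with hfX | hfY
    · have hG : MakerWins Y G false M (insert f B) :=
        hG.mono subset_rfl le_rfl subset_rfl (by grind [Finset.disjoint_left])
      exact ih _ hlt hXY (hF f hfX hfM hfB) hG rfl
    · have hG : MakerWins Y G true M (insert f B) := hG.after_breaker_move hfY hfM hfB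
      have hF : MakerWins X F false M (insert f B) :=
        (MakerWins.breakerMove e he heM heB hF).mono subset_rfl le_rfl subset_rfl
          (by grind [Finset.disjoint_left])
      rw [Finset.union_comm X Y] at hlt ⊢
      rw [Set.sups_comm]
      exact ih _ (by simpa only [Finset.union_comm] using hlt) hXY.symm hG hF rfl

theorem exists_disjoint (h : MakerWins X F t M B) (hMB : Disjoint M B) :
    ∃ A ∈ F, Disjoint A B := by
  induction h with
  | claim A hA hAM => exact ⟨A, hA, hMB.mono_left hAM⟩
  | makerMove e _ _ heB _ ih => exact ih (Finset.disjoint_insert_left.2 ⟨heB, hMB⟩)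
  | breakerMove e he heM heB _ ih =>
    obtain ⟨A, hA, hAB⟩ := ih e he heM heB (Finset.disjoint_insert_right.2 ⟨heM, hMB⟩)
    exact ⟨A, hA, hAB.mono_right (Finset.subset_insert e _)⟩

end MakerWins

theorem not_makerWins_of_pair {x y : α} (hxy : x ≠ y) (hx : x ∈ X \ (M ∪ B))
    (hy : y ∈ X \ (M ∪ B)) (hMB : Disjoint M B) (hF : ∀ A ∈ F, Disjoint A B → x ∈ A ∧ y ∈ A) :
    ¬ MakerWins X F true M B := by
  simp only [Finset.mem_sdiff, Finset.mem_union, not_or] at hx hy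
  intro h
  obtain ⟨e, -, -, heB, h⟩ := h.exists_maker_move ⟨x, hx.1, hx.2⟩
  obtain ⟨z, hez, hz⟩ : ∃ z, e ≠ z ∧ (z = x ∨ z = y) := by
    rcases eq_or_ne e x with rfl | hex
    · exact ⟨y, hxy, .inr rfl⟩
    · exact ⟨x, hex, .inl rfl⟩
  have hzX : z ∈ X ∧ z ∉ M ∧ z ∉ B := by grind
  obtain ⟨A, hA, hAB⟩ := (h.after_breaker_move hzX.1 (by grind) hzX.2.2).exists_disjoint
    (by grind [Finset.disjoint_left])
  obtain ⟨hzA, hAB⟩ := Finset.disjoint_insert_right.1 hAB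
  grind

theorem makerWins_pair {p : Fin 2 → α} (hp : Function.Injective p) :
    MakerWins (Finset.univ.image p) {A | ∃ j, p j ∈ A} false ∅ ∅ := by
  have hmem (j : Fin 2) : p j ∈ Finset.univ.image p :=
    Finset.mem_image_of_mem p (Finset.mem_univ j)
  refine .breakerMove (p 0) (hmem 0) (by simp) (by simp) fun f hf _ _ => ?_
  obtain ⟨j, -, rfl⟩ := Finset.mem_image.1 hf
  exact .makerMove (p j.rev) (hmem j.rev) (by simp) (by fin_cases j <;> simp [hp.eq_iff])
    (.claim {p j.rev} ⟨j.rev, by simp⟩ (by simp))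

theorem makerWins_pairing {I : Finset ι} {e : ι → Fin 2 → α}
    (he : Set.InjOn (Function.uncurry e) (I ×ˢ Set.univ)) :
    MakerWins (I.biUnion fun i => Finset.univ.image (e i)) {A | ∀ i ∈ I, ∃ j, e i j ∈ A}
      false ∅ ∅ := by
  classical
  induction I using Finset.induction_on with
  | empty => exact .claim ∅ (by simp) subset_rfl
  | insert i I hi ih =>
    have hi_inj : Function.Injective (e i) := fun j k hjk =>
      congrArg Prod.snd (@he (i, j) (by simp) (i, k) (by simp) hjk)
    have hdisj : Disjoint (Finset.univ.image (e i))
        (I.biUnion fun i => Finset.univ.image (e i)) := by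
      simp only [Finset.disjoint_left, Finset.mem_image, Finset.mem_biUnion, Finset.mem_univ,
        true_and, not_exists, not_and]
      rintro _ ⟨j, rfl⟩ i' hi' k hk
      have : i' = i :=
        congrArg Prod.fst (@he (i', k) (by simp [hi']) (i, j) (by simp) hk)
      exact hi (this ▸ hi')
    have hI := ih (he.mono (Set.prod_mono_left (by simp)))
    rw [Finset.biUnion_insert]
    refine (MakerWins.sups hdisj (makerWins_pair hi_inj) hI).of_winning_imp ?_
    rintro N - ⟨_, ⟨A, ⟨j, hj⟩, C, hC, rfl⟩, hN⟩
    refine ⟨_, fun i' hi' => ?_, hN⟩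
    rcases Finset.mem_insert.1 hi' with rfl | hi'
    · exact ⟨j, Finset.mem_union_left C hj⟩
    · exact (hC i' hi').imp fun k => Finset.mem_union_right A

end Game

section SpanningPath

variable {V W : Type} [DecidableEq V] [DecidableEq W] {S T : Finset V} {A A' : Finset (Sym2 V)}

/-- The edge set of the complete graph on the vertex set `S`. -/
def completeEdges (S : Finset V) : Finset (Sym2 V) :=
  S.sym2.filter fun e => ¬ e.IsDiag

/-- The edge sets that contain a path with vertex set `S`: an upward closed replacement for
Hamiltonian paths that makes sense on a varying set of vertices. -/
def spanningPaths (S : Finset V) : Set (Finset (Sym2 V)) :=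
  {A | ∃ (a b : V) (p : (SimpleGraph.fromEdgeSet (A : Set (Sym2 V))).Walk a b),
    p.IsPath ∧ p.support.toFinset = S}

theorem mk_mem_completeEdges {a b : V} : s(a, b) ∈ completeEdges S ↔ a ∈ S ∧ b ∈ S ∧ a ≠ b := by
  simp [completeEdges, and_assoc]

theorem completeEdges_univ [Fintype V] :
    completeEdges (Finset.univ : Finset V) = (⊤ : SimpleGraph V).edgeFinset := by
  ext e
  simp [completeEdges]

theorem completeEdges_mono (h : S ⊆ T) : completeEdges S ⊆ completeEdges T :=
  Finset.filter_subset_filter _ (Finset.sym2_mono h)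

theorem spanningPaths_mono (hA : A ∈ spanningPaths S) (hAA' : A ⊆ A') : A' ∈ spanningPaths S := by
  obtain ⟨a, b, p, hp, rfl⟩ := hA
  have hle := SimpleGraph.fromEdgeSet_mono (Finset.coe_subset.2 hAA')
  exact ⟨a, b, p.mapLe hle, (SimpleGraph.Walk.isPath_mapLe hle).2 hp, by simp⟩

theorem mem_spanningPaths_iff_exists_list :
    A ∈ spanningPaths S ↔ ∃ l : List V, l ≠ [] ∧ l.Nodup ∧ l.toFinset = S ∧
      l.IsChain (SimpleGraph.fromEdgeSet (A : Set (Sym2 V))).Adj := by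
  constructor
  · rintro ⟨a, b, p, hp, hpS⟩
    exact ⟨p.support, p.support_ne_nil, hp.support_nodup, hpS, p.isChain_adj_support⟩
  · rintro ⟨l, hne, hl, hlS, hchain⟩
    refine ⟨_, _, .ofSupport l hne hchain, .mk' ?_, ?_⟩ <;>
      rwa [SimpleGraph.Walk.support_ofSupport]

theorem mem_spanningPaths_univ_iff {k : ℕ} {A : Finset (Sym2 (Fin k))} :
    A ∈ spanningPaths Finset.univ ↔ ∃ l ∈ (List.finRange k).permutations', l ≠ [] ∧
      l.IsChain (SimpleGraph.fromEdgeSet (A : Set (Sym2 (Fin k)))).Adj := by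
  have hperm (l : List (Fin k)) :
      l ∈ (List.finRange k).permutations' ↔ l.Nodup ∧ l.toFinset = Finset.univ := by
    rw [List.mem_permutations', ← List.toFinset_finRange]
    refine ⟨fun h => ⟨h.nodup_iff.2 (List.nodup_finRange k), List.toFinset_eq_of_perm _ _ h⟩,
      fun ⟨hl, h⟩ => List.perm_of_nodup_nodup_toFinset_eq hl (List.nodup_finRange k) h⟩
  rw [mem_spanningPaths_iff_exists_list]
  exact exists_congr fun l => by rw [hperm]; tauto

instance {k : ℕ} (A : Finset (Sym2 (Fin k))) : Decidable (A ∈ spanningPaths Finset.univ) :=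
  decidable_of_iff' _ mem_spanningPaths_univ_iff

theorem exists_hamPath_subset_iff {n : ℕ} {A : Finset (Sym2 (Fin n))} :
    (∃ H ∈ HamPaths n, H ⊆ A) ↔ A ∈ spanningPaths Finset.univ := by
  constructor
  · rintro ⟨_, ⟨a, b, p, hp, rfl⟩, hpA⟩
    have hadj : ∀ e ∈ p.edges, e ∈ (SimpleGraph.fromEdgeSet (A : Set (Sym2 (Fin n)))).edgeSet :=
      fun e he => by
        simpa using ⟨hpA (by simpa using he), (⊤ : SimpleGraph (Fin n)).not_isDiag_of_mem_edgeSet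
          (p.edges_subset_edgeSet he)⟩
    exact ⟨a, b, p.transfer _ hadj, hp.isPath.transfer hadj, by simp [hp.toFinset_support]⟩
  · rintro ⟨a, b, p, hp, hpS⟩
    refine ⟨_, ⟨a, b, p.mapLe le_top, ?_, rfl⟩, fun e he => ?_⟩
    · refine ((SimpleGraph.Walk.isPath_mapLe le_top).2 hp).isHamiltonian_of_mem fun v => ?_
      simp [← List.mem_toFinset, hpS]
    · have := p.edges_subset_edgeSet (by simpa using he)
      simp_all

theorem map_mem_spanningPaths {f : V → W} (hf : Function.Injective f)
    (hA : A ∈ spanningPaths S) : A.image (Sym2.map f) ∈ spanningPaths (S.image f) := by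
  obtain ⟨a, b, p, hp, rfl⟩ := hA
  let φ : SimpleGraph.fromEdgeSet (A : Set (Sym2 V)) →g
      SimpleGraph.fromEdgeSet (A.image (Sym2.map f) : Set (Sym2 W)) :=
    ⟨f, fun {v w} hvw => by
      rw [SimpleGraph.fromEdgeSet_adj] at hvw ⊢
      exact ⟨Finset.mem_coe.2 (Finset.mem_image_of_mem (Sym2.map f) hvw.1), hf.ne hvw.2⟩⟩
  exact ⟨f a, f b, p.map φ, hp.map hf, by ext; simp [φ]⟩

theorem exists_isPath_start_ne (hA : A ∈ spanningPaths S) (hS : 1 < S.card) (x : V) :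
    ∃ (a b : V) (p : (SimpleGraph.fromEdgeSet (A : Set (Sym2 V))).Walk a b),
      a ≠ x ∧ p.IsPath ∧ p.support.toFinset = S := by
  obtain ⟨a, b, p, hp, rfl⟩ := hA
  have hab : a ≠ b := by
    rintro rfl
    simp [(SimpleGraph.Walk.isPath_iff_nil.1 hp).eq_nil] at hS
  rcases eq_or_ne a x with rfl | hax
  · exact ⟨b, a, p.reverse, hab.symm, hp.reverse, by simp⟩
  · exact ⟨a, b, p, hax, hp, rfl⟩

theorem mem_spanningPaths_insert_insert {u v x : V} (huv : u ≠ v) (hu : u ∉ T) (hv : v ∉ T)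
    (hT : 1 < T.card) (huvA : s(u, v) ∈ A) (hA : A ∈ spanningPaths T)
    (hattach : ∀ y ∈ T.erase x, s(y, u) ∈ A ∨ s(y, v) ∈ A) :
    A ∈ spanningPaths (insert u (insert v T)) := by
  obtain ⟨a, b, p, hax, hp, rfl⟩ := exists_isPath_start_ne hA hT x
  rw [List.mem_toFinset] at hu hv
  have hne {w : V} (hw : w ∉ p.support) : w ≠ a := fun h => hw (h ▸ p.start_mem_support)
  rcases hattach a (by simp [hax]) with hau | hav
  · refine ⟨v, b, .cons (v := u) ?_ (.cons (v := a) ?_ p), ?_, ?_⟩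
    · simp [Sym2.eq_swap, huvA, huv.symm]
    · simp [Sym2.eq_swap ▸ hau, hne hu]
    · simp [SimpleGraph.Walk.cons_isPath_iff, hp, hu, hv, huv.symm]
    · simp [Finset.insert_comm]
  · refine ⟨u, b, .cons (v := v) ?_ (.cons (v := a) ?_ p), ?_, ?_⟩
    · simp [huvA, huv]
    · simp [Sym2.eq_swap ▸ hav, hne hv]
    · simp [SimpleGraph.Walk.cons_isPath_iff, hp, hu, hv, huv]
    · simp

theorem mem_of_mem_spanningPaths_four {a b c d : V} (hnd : [a, b, c, d].Nodup)
    (hA : A ∈ spanningPaths {a, b, c, d}) (hab : s(a, b) ∉ A) (hac : s(a, c) ∉ A) :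
    s(a, d) ∈ A ∧ s(b, c) ∈ A := by
  obtain ⟨l, -, hl, hlS, hchain⟩ := mem_spanningPaths_iff_exists_list.1 hA
  have hlen : l.length = 4 := by
    rw [← List.toFinset_card_of_nodup hl, hlS]
    simp_all
  obtain ⟨w, x, y, z, rfl⟩ := List.length_eq_four.1 hlen
  have hmem (v : V) : v ∈ ({a, b, c, d} : Finset V) ↔ v = w ∨ v = x ∨ v = y ∨ v = z := by
    simp [← hlS]
  have ha := (hmem a).1 (by simp)
  have hb := (hmem b).1 (by simp)
  have hc := (hmem c).1 (by simp)
  have hd := (hmem d).1 (by simp)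
  simp only [List.isChain_cons_cons, SimpleGraph.fromEdgeSet_adj, Finset.mem_coe] at hchain
  obtain ⟨R, hR⟩ : ∃ R : V → V → Prop, ∀ p q, s(p, q) ∈ A ↔ R p q := ⟨_, fun _ _ => Iff.rfl⟩
  have hsymm (p q : V) : R p q → R q p := by simp only [← hR, Sym2.eq_swap, imp_self]
  simp only [hR] at hab hac hchain ⊢
  rcases ha with rfl | rfl | rfl | rfl <;> grind

end SpanningPath

section CompleteGraph

variable {V ι : Type} [DecidableEq V] {S : Finset V}

theorem makerWins_spanningPaths_of_pairing [Fintype ι] {k : ℕ}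
    {e : ι → Fin 2 → Sym2 (Fin k)} (he : Function.Injective (Function.uncurry e))
    (hdiag : ∀ i j, ¬ (e i j).IsDiag)
    (hpath : ∀ c : ι → Fin 2,
      Finset.univ.image (fun i => e i (c i)) ∈ spanningPaths Finset.univ)
    (hS : S.card = k) : MakerWins (completeEdges S) (spanningPaths S) false ∅ ∅ := by
  obtain ⟨g, hg, rfl⟩ : ∃ g : Fin k → V, Function.Injective g ∧ Finset.univ.image g = S := by
    refine ⟨fun i => (S.equivFinOfCardEq hS).symm i,
      Subtype.val_injective.comp (Equiv.injective _), ?_⟩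
    ext v
    simpa using ⟨fun ⟨i, hi⟩ => hi ▸ Subtype.prop _,
      fun hv => ⟨S.equivFinOfCardEq hS ⟨v, hv⟩, by simp⟩⟩
  have hinj : Function.Injective
      (Function.uncurry fun i j => (e i j).map g) := (Sym2.map.injective hg).comp he
  refine ((makerWins_pairing (I := Finset.univ) hinj.injOn).mono ?_ le_rfl subset_rfl
    (by simp)).of_winning_imp ?_
  · simp only [Finset.biUnion_subset, Finset.image_subset_iff]
    intro i _ j _
    have hij := hdiag i j
    generalize e i j = z at hij ⊢
    induction z with | _ a b
    simpa [mk_mem_completeEdges, hg.eq_iff] using hij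
  · rintro N - ⟨A, hA, hAN⟩
    choose c hc using fun i => hA i (Finset.mem_univ i)
    refine ⟨N, spanningPaths_mono (map_mem_spanningPaths hg (hpath c)) ?_, subset_rfl⟩
    simp only [Finset.image_image, Finset.image_subset_iff]
    exact fun i _ => hAN (hc i)

theorem makerWins_spanningPaths_five (hS : S.card = 5) :
    MakerWins (completeEdges S) (spanningPaths S) false ∅ ∅ :=
  makerWins_spanningPaths_of_pairing (e := fun i : Fin 5 => ![s(i, i + 1), s(i, i + 2)])
    (by decide) (by decide) (by decide +kernel) hS

theorem makerWins_spanningPaths_six (hS : S.card = 6) :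
    MakerWins (completeEdges S) (spanningPaths S) false ∅ ∅ :=
  makerWins_spanningPaths_of_pairing
    (e := Fin.cons ![s((0 : Fin 6), 3), s(1, 4)] fun i : Fin 6 => ![s(i, i + 1), s(i, i + 4)])
    (by decide) (by decide) (by decide +kernel) hS

theorem makerWins_edge_to_pair {u v : V} (huv : u ≠ v) (hu : u ∉ S) (hv : v ∉ S) :
    MakerWins (S.biUnion fun y => {s(y, u), s(y, v)}) {A | ∀ y ∈ S, s(y, u) ∈ A ∨ s(y, v) ∈ A}
      false ∅ ∅ := by
  have hinj : Set.InjOn (Function.uncurry fun y => ![s(y, u), s(y, v)])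
      (S ×ˢ (Set.univ : Set (Fin 2))) := by
    have hne {y : V} (hy : y ∈ S) : y ≠ u ∧ y ≠ v :=
      ⟨ne_of_mem_of_not_mem hy hu, ne_of_mem_of_not_mem hy hv⟩
    rintro ⟨y, j⟩ ⟨hy, -⟩ ⟨z, k⟩ ⟨hz, -⟩ h
    have hyuv := hne hy
    have hzuv := hne hz
    fin_cases j <;> fin_cases k <;> simp_all
  have himage (y : V) : Finset.univ.image ![s(y, u), s(y, v)] = {s(y, u), s(y, v)} := by
    ext
    simp [Fin.exists_fin_two, eq_comm]
  simpa [Fin.exists_fin_two, himage] using makerWins_pairing hinj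

theorem makerWins_spanningPaths_insert_insert {u v : V} (x : V) (huv : u ≠ v) (hu : u ∉ S)
    (hv : v ∉ S) (hcard : 1 < S.card)
    (hS : MakerWins (completeEdges S) (spanningPaths S) false ∅ ∅) :
    MakerWins (completeEdges (insert u (insert v S))) (spanningPaths (insert u (insert v S))) false
      {s(u, v)} {s(x, u)} := by
  have hxu : s(x, u) ∉ completeEdges S ∪ (S.erase x).biUnion fun y => {s(y, u), s(y, v)} := by
    simp only [Finset.mem_union, Finset.mem_biUnion, Finset.mem_insert, Finset.mem_singleton,
      mk_mem_completeEdges]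
    grind
  have hjoin := makerWins_edge_to_pair (S := S.erase x) huv (by simp [hu]) (by simp [hv])
  have hdisj : Disjoint (completeEdges S)
      ((S.erase x).biUnion fun y => {s(y, u), s(y, v)}) := by
    simp [Finset.disjoint_biUnion_right, mk_mem_completeEdges, hu, hv]
  refine ((hS.sups hdisj hjoin).mono ?_ le_rfl (Finset.empty_subset _) ?_).of_winning_imp ?_
  · refine Finset.union_subset (completeEdges_mono (by grind)) ?_
    simp only [Finset.biUnion_subset, Finset.insert_subset_iff, Finset.singleton_subset_iff,
      mk_mem_completeEdges]
    grind
  · rw [Finset.inter_singleton_of_notMem hxu]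
  · rintro N huvN ⟨_, ⟨A, hA, C, hC, rfl⟩, hN⟩
    have hCN := Finset.subset_union_right.trans hN
    refine ⟨N, mem_spanningPaths_insert_insert (x := x) huv hu hv hcard (huvN (by simp))
      (spanningPaths_mono hA (Finset.subset_union_left.trans hN)) fun y hy => ?_, subset_rfl⟩
    exact (hC y hy).imp (@hCN _) (@hCN _)

theorem makerWins_spanningPaths_of_add_two (hS : 4 ≤ S.card)
    (ih : ∀ T : Finset V, T.card + 2 = S.card →
      MakerWins (completeEdges T) (spanningPaths T) false ∅ ∅) :
    MakerWins (completeEdges S) (spanningPaths S) false ∅ ∅ := by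
  obtain ⟨a, ha, b, hb, hab⟩ := Finset.one_lt_card.1 (by omega : 1 < S.card)
  refine .breakerMove s(a, b) (mk_mem_completeEdges.2 ⟨ha, hb, hab⟩) (by simp) (by simp)
    fun f hf _ _ => ?_
  induction f with | _ x u
  obtain ⟨-, hu, -⟩ := mk_mem_completeEdges.1 hf
  obtain ⟨v, hv, hvxu⟩ := Finset.exists_mem_notMem_of_card_lt_card
    (Finset.card_le_two.trans_lt (by omega) : ({x, u} : Finset V).card < S.card)
  obtain ⟨hvx, hvu⟩ : v ≠ x ∧ v ≠ u := by simpa using hvxu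
  obtain ⟨T, huT, hvT, rfl⟩ : ∃ T : Finset V, u ∉ T ∧ v ∉ T ∧ insert u (insert v T) = S :=
    ⟨(S.erase u).erase v, by simp, by simp, by grind⟩
  have hcard : T.card + 2 = (insert u (insert v T)).card := by
    rw [Finset.card_insert_of_notMem (by simp [huT, hvu.symm]), Finset.card_insert_of_notMem hvT]
  exact .makerMove s(u, v) (mk_mem_completeEdges.2 ⟨hu, hv, hvu.symm⟩) (by simp) (by grind)
    (makerWins_spanningPaths_insert_insert x hvu.symm huT hvT (by omega) (ih T hcard))

theorem makerWins_spanningPaths (hS : 5 ≤ S.card) :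
    MakerWins (completeEdges S) (spanningPaths S) false ∅ ∅ := by
  obtain ⟨n, hn⟩ := Nat.exists_eq_add_of_le' hS
  induction n using Nat.twoStepInduction generalizing S with
  | zero => exact makerWins_spanningPaths_five hn
  | one => exact makerWins_spanningPaths_six hn
  | more n ih _ =>
    exact makerWins_spanningPaths_of_add_two (by omega)
      fun T hT => ih (by omega) (by omega)

theorem not_makerWins_spanningPaths_four :
    ¬ MakerWins (completeEdges (Finset.univ : Finset (Fin 4))) (spanningPaths Finset.univ)
      false ∅ ∅ := by
  intro h
  have h := h.after_breaker_move (f := s(0, 1)) (by decide) (by decide) (by decide)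
  obtain ⟨f, -, -, hf, h⟩ := h.exists_maker_move ⟨s(2, 3), by decide, by decide, by decide⟩
  have hsplit : ∀ f ≠ s((0 : Fin 4), 1), ∃ a b c d : Fin 4, [a, b, c, d].Nodup ∧
      s(a, b) = s(0, 1) ∧ f ∉ [s(a, c), s(a, d), s(b, c)] := by decide
  obtain ⟨a, b, c, d, hnd, hab, hfree⟩ := hsplit f (by simpa using hf)
  rw [← hab] at h hf
  obtain ⟨hac, had, hbc⟩ : f ≠ s(a, c) ∧ f ≠ s(a, d) ∧ f ≠ s(b, c) := by simpa using hfree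
  have hS : Finset.univ = ({a, b, c, d} : Finset (Fin 4)) := by
    refine (Finset.eq_univ_of_card _ ?_).symm
    simpa using List.toFinset_card_of_nodup hnd
  have hmem (p q : Fin 4) : s(p, q) ∈ completeEdges Finset.univ ↔ p ≠ q := by
    simp [mk_mem_completeEdges]
  have h := h.after_breaker_move (f := s(a, c)) (by grind) (by grind) (by grind)
  refine not_makerWins_of_pair (x := s(a, d)) (y := s(b, c)) ?_ ?_ ?_ ?_ ?_ h
  · grind
  · grind
  · grind
  · grind
  · intro A hA hAB
    obtain ⟨hacA, habA⟩ : s(a, c) ∉ A ∧ s(a, b) ∉ A := by simpa using hAB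
    exact mem_of_mem_spanningPaths_four hnd (hS ▸ hA) habA hacA

theorem makerWins_hamPaths_iff {n : ℕ} {t : Bool} : MakerWins (Board n) (HamPaths n) t ∅ ∅ ↔
    MakerWins (completeEdges (Finset.univ : Finset (Fin n))) (spanningPaths Finset.univ) t ∅ ∅ := by
  rw [Board, completeEdges_univ]
  constructor
  · exact fun h => h.of_winning_imp fun N _ hN => ⟨N, exists_hamPath_subset_iff.1 hN, subset_rfl⟩
  · exact fun h => h.of_winning_imp fun N _ ⟨_, hA, hAN⟩ =>
      exists_hamPath_subset_iff.2 (spanningPaths_mono hA hAN)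

end CompleteGraph

/-- In the Maker-Breaker Hamiltonian Path game on `E(K_n)` with `n ≥ 4`, Maker has a
winning strategy regardless of who moves first if and only if `n ≥ 5`. -/
theorem hamiltonian_path_game (n : ℕ) (hn : 4 ≤ n) :
    (MakerWinsFirst (Board n) (HamPaths n) ∧ MakerWinsSecond (Board n) (HamPaths n)) ↔
      5 ≤ n := by
  simp only [MakerWinsFirst, MakerWinsSecond, makerWins_hamPaths_iff]
  constructor
  · rintro ⟨-, hsecond⟩
    by_contra! hlt
    obtain rfl : n = 4 := by omega
    exact not_makerWins_spanningPaths_four hsecond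
  · intro hn5
    have hsecond := makerWins_spanningPaths (S := (Finset.univ : Finset (Fin n)))
      (by rwa [Finset.card_fin])
    exact ⟨hsecond.mono subset_rfl (Bool.false_le true) subset_rfl Finset.inter_subset_right,
      hsecond⟩
end

section
/- In the Maker-Breaker Hamiltonicity game on E(K_n) with n ∈ {4,5,6,7}, Breaker has a winning strategy regardless of who moves first. -/
/-- `BreakerWins X F t M B` : from the position where Maker has claimed `M`, Breaker has
claimed `B`, and it is Maker's turn iff `t = true`, Breaker has a winning strategy
(he can ensure that he claims an element of every winning set). -/
inductive BreakerWins {α : Type} [DecidableEq α] (X : Finset α) (F : Set (Finset α)) :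
    Bool → Finset α → Finset α → Prop
  | block {t : Bool} {M B : Finset α} (h : ∀ A ∈ F, ∃ e ∈ A, e ∈ B) : BreakerWins X F t M B
  | breakerMove {M B : Finset α} (e : α) (he : e ∈ X) (heM : e ∉ M) (heB : e ∉ B)
      (h : BreakerWins X F true M (insert e B)) : BreakerWins X F false M B
  | makerMove {M B : Finset α} (e : α) (he : e ∈ X) (heM : e ∉ M) (heB : e ∉ B)
      (h : ∀ f ∈ X, f ∉ M → f ∉ B → BreakerWins X F false (insert f M) B) :
      BreakerWins X F true M B

/-- Breaker, moving first, has a winning strategy in the game `(X, F)`. -/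
def BreakerWinsFirst {α : Type} [DecidableEq α] (X : Finset α) (F : Set (Finset α)) : Prop :=
  BreakerWins X F false ∅ ∅

/-- Breaker, moving second (Maker moves first), has a winning strategy in `(X, F)`. -/
def BreakerWinsSecond {α : Type} [DecidableEq α] (X : Finset α) (F : Set (Finset α)) : Prop :=
  BreakerWins X F true ∅ ∅

/-!
A *threat* is a set of edges owned by Breaker together with a set of unclaimed edges from which
Breaker, being on the move, wins whatever has happened elsewhere on the board. If Breaker can claim
an edge `e` so that each reply of Maker leaves one of several threats intact, then these threats
combine into a new one, and relabelling the vertices turns threats into threats. So threats can be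
built up from the edge sets that meet every Hamiltonian cycle, until one is found that owns no edge
and leaves some edge of `K_n` unused. It wins for Breaker as first player, and, since `K_n` is
edge-transitive, also after an arbitrary first edge of Maker.

Two kinds of edge sets meeting every Hamiltonian cycle are enough. The first kind destroys
toughness: some set `T ≠ ∅` of vertices leaves more than `|T|` components when it is removed from
the remaining graph. The second kind leaves three vertices of degree two with a common neighbour;
it is needed for `n = 7`, the order of the smallest 1-tough graph that is not Hamiltonian.
-/

open Finset

namespace BreakerWins

variable {α β : Type} [DecidableEq α] [DecidableEq β] {X : Finset α} {F : Set (Finset α)}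

theorem map (φ : α ↪ β) {t : Bool} {M B : Finset α} (h : BreakerWins X F t M B) :
    BreakerWins (X.map φ) (Finset.map φ '' F) t (M.map φ) (B.map φ) := by
  induction h with
  | block h =>
    refine block ?_
    rintro _ ⟨A, hA, rfl⟩
    obtain ⟨e, heA, heB⟩ := h A hA
    exact ⟨φ e, mem_map_of_mem φ heA, mem_map_of_mem φ heB⟩
  | breakerMove e he heM heB _ ih =>
    exact breakerMove (φ e) (by simpa) (by simpa) (by simpa) (by simpa only [map_insert] using ih)
  | makerMove e he heM heB _ ih =>
    refine makerMove (φ e) (by simpa) (by simpa) (by simpa) fun f hf hfM hfB => ?_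
    obtain ⟨f, -, rfl⟩ := mem_map.1 hf
    rw [mem_map' φ] at hf hfM hfB
    simpa only [map_insert] using ih f hf hfM hfB

theorem true_of_forall_insert {M B : Finset α} (hfull : BreakerWins X F false M B)
    (h : ∀ f ∈ X, f ∉ M → f ∉ B → BreakerWins X F false (insert f M) B) :
    BreakerWins X F true M B := by
  cases hfull with
  | block hB => exact block hB
  | breakerMove e he heM heB => exact makerMove e he heM heB h

end BreakerWins

/-- A pattern in the positions of a Maker-Breaker game: Breaker has claimed the elements of `owned`,
and nobody has claimed an element of `free`. -/
structure Threat (α : Type*) where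
  owned : Finset α
  free : Finset α

namespace Threat

variable {α : Type} [DecidableEq α] {X : Finset α} {F : Set (Finset α)}

/-- The threat `t` wins in the game `(X, F)` if Breaker, being on the move, has a winning strategy
in every position that exhibits the pattern `t`. -/
def Wins (X : Finset α) (F : Set (Finset α)) (t : Threat α) : Prop :=
  ∀ ⦃M B : Finset α⦄, t.owned ⊆ B → Disjoint t.free (M ∪ B) → BreakerWins X F false M B

/-- The image of a threat under a relabelling of the board. -/
def map {β : Type*} (φ : α ↪ β) (t : Threat α) : Threat β :=
  ⟨t.owned.map φ, t.free.map φ⟩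

/-- The pattern that exhibits all the threats in `ts` at once. -/
def union (ts : List (Threat α)) : Threat α :=
  ts.foldr (fun t u => ⟨t.owned ∪ u.owned, t.free ∪ u.free⟩) ⟨∅, ∅⟩

/-- The pattern in which claiming `e` makes Breaker exhibit all the threats in `ts` at once. -/
def claim (e : α) (ts : List (Threat α)) : Threat α :=
  ⟨(union ts).owned.erase e, insert e (union ts).free⟩

theorem owned_subset_union_and_free_subset_union {t : Threat α} {ts : List (Threat α)}
    (ht : t ∈ ts) : t.owned ⊆ (union ts).owned ∧ t.free ⊆ (union ts).free := by
  induction ts with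
  | nil => exact absurd ht List.not_mem_nil
  | cons u us ih =>
    rcases List.mem_cons.1 ht with rfl | h
    · exact ⟨subset_union_left, subset_union_left⟩
    · exact ⟨(ih h).1.trans subset_union_right, (ih h).2.trans subset_union_right⟩

theorem wins_of_forall_mem {D : Finset α} (hD : ∀ A ∈ F, ∃ e ∈ A, e ∈ D) : Wins X F ⟨D, ∅⟩ :=
  fun _ _ hB _ => .block fun A hA => (hD A hA).imp fun _ he => ⟨he.1, hB he.2⟩

theorem Wins.map {β : Type} [DecidableEq β] {t : Threat α} (ht : t.Wins X F) (φ : α ≃ β) :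
    (t.map φ.toEmbedding).Wins (X.map φ.toEmbedding) (Finset.map φ.toEmbedding '' F) := by
  intro M B hB hfree
  obtain ⟨M, rfl⟩ := φ.finsetCongr.surjective M
  obtain ⟨B, rfl⟩ := φ.finsetCongr.surjective B
  simp only [Equiv.finsetCongr_apply, Threat.map, ← map_union, disjoint_map, map_subset_map]
    at hB hfree ⊢
  exact (ht hB hfree).map φ.toEmbedding

theorem wins_claim {e : α} (he : e ∈ X) {ts : List (Threat α)} (hts : ∀ t ∈ ts, t.Wins X F)
    (hfree : ∀ t ∈ ts, e ∉ t.free) (hreply : ∀ f ∈ X, ∃ t ∈ ts, f ∉ t.free) :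
    (claim e ts).Wins X F := by
  intro M B hB hdisj
  obtain ⟨heM, heB⟩ : e ∉ M ∧ e ∉ B := by
    simpa only [mem_union, not_or] using disjoint_left.1 hdisj (mem_insert_self e _)
  have howned {t : Threat α} (ht : t ∈ ts) : t.owned ⊆ insert e B :=
    (owned_subset_union_and_free_subset_union ht).1.trans (subset_insert_iff.2 hB)
  have hfree_claim {t : Threat α} (ht : t ∈ ts) : Disjoint t.free (M ∪ insert e B) := by
    rw [union_insert, disjoint_insert_right]
    exact ⟨hfree t ht, hdisj.mono_left
      ((owned_subset_union_and_free_subset_union ht).2.trans (subset_insert _ _))⟩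
  refine .breakerMove e he heM heB (.true_of_forall_insert ?_ fun f hf _ _ => ?_)
  · obtain ⟨t, ht, -⟩ := hreply e he
    exact hts t ht (howned ht) (hfree_claim ht)
  · obtain ⟨t, ht, hft⟩ := hreply f hf
    refine hts t ht (howned ht) ?_
    rw [insert_union, disjoint_insert_right]
    exact ⟨hft, hfree_claim ht⟩

end Threat

section HamiltonianCycles

open SimpleGraph

variable {V : Type*}

theorem exists_isCycleOn_univ_of_isHamiltonianCycle [DecidableEq V] {G : SimpleGraph V} {a : V}
    {p : G.Walk a a} (hp : p.IsHamiltonianCycle) :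
    ∃ σ : Equiv.Perm V, σ.IsCycleOn Set.univ ∧ ∀ v, s(v, σ v) ∈ p.edges := by
  have hnodup : p.support.tail.Nodup := hp.isCycle.support_nodup
  have hmem (v : V) : v ∈ p.support.tail := by
    have hcount := (Walk.isHamiltonianCycle_iff_isCycle_and_support_count_tail_eq_one.1 hp).2 v
    exact List.count_pos_iff.1 (by lia)
  have hlength : p.support.tail.length = p.length := by simp
  have hget (i : ℕ) (hi : i < p.support.tail.length) : p.support.tail[i] = p.getVert (i + 1) := by
    simp [Walk.support_getElem_eq_getVert]
  refine ⟨p.support.tail.formPerm, by simpa [hmem] using hnodup.isCycleOn_formPerm, fun v => ?_⟩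
  obtain ⟨i, hi, rfl⟩ := List.getElem_of_mem (hmem v)
  rw [List.formPerm_apply_getElem _ hnodup, hget, hget, Walk.mk_mem_edges_iff_exists, hlength]
  rcases (show i + 1 ≤ p.length by lia).lt_or_eq with hlt | heq
  · exact ⟨i + 1, hlt, by rw [Nat.mod_eq_of_lt hlt]⟩
  · exact ⟨0, by lia, by simp [heq]⟩

theorem apply_apply_ne_of_isCycleOn_univ [Fintype V] {σ : Equiv.Perm V}
    (hσ : σ.IsCycleOn Set.univ) (hV : 2 < Fintype.card V) (x : V) : σ (σ x) ≠ x := by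
  intro h
  have hdvd : Fintype.card V ∣ 2 :=
    (Equiv.Perm.IsCycleOn.pow_apply_eq (s := univ) (by rwa [coe_univ]) (mem_univ x)).1 h
  exact hV.not_ge (Nat.le_of_dvd two_pos hdvd)

theorem exists_eq_and_apply_mem_of_isCycleOn_univ [Finite V] {κ : Type*} {σ : Equiv.Perm V}
    (hσ : σ.IsCycleOn Set.univ) {T : Finset V} (hT : T.Nonempty) {c : V → κ}
    (hc : ∀ v ∉ T, σ v ∉ T → c (σ v) = c v) {v : V} (hv : v ∉ T) : ∃ u, c u = c v ∧ σ u ∈ T := by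
  obtain ⟨t, ht⟩ := hT
  obtain ⟨k, hk⟩ := hσ.exists_pow_eq' Set.finite_univ (Set.mem_univ v) (Set.mem_univ t)
  induction k generalizing v with
  | zero => exact absurd (show v = t from hk) (ne_of_mem_of_not_mem ht hv).symm
  | succ k ih =>
    by_cases hσv : σ v ∈ T
    · exact ⟨v, rfl, hσv⟩
    · obtain ⟨u, hu, huT⟩ := ih hσv (by rwa [pow_succ] at hk)
      exact ⟨u, hu.trans (hc v hv hσv), huT⟩

theorem card_image_compl_le_of_isCycleOn_univ [Fintype V] [DecidableEq V] {κ : Type*}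
    [DecidableEq κ] {σ : Equiv.Perm V} (hσ : σ.IsCycleOn Set.univ) {T : Finset V} (hT : T.Nonempty)
    {c : V → κ} (hc : ∀ v ∉ T, σ v ∉ T → c (σ v) = c v) : #(Tᶜ.image c) ≤ #T := by
  have hsubset : Tᶜ.image c ⊆ T.image fun t => c (σ.symm t) := by
    refine image_subset_iff.2 fun v hv => ?_
    obtain ⟨u, hu, huT⟩ := exists_eq_and_apply_mem_of_isCycleOn_univ hσ hT hc (mem_compl.1 hv)
    exact mem_image.2 ⟨σ u, huT, by rwa [σ.symm_apply_apply]⟩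
  exact (card_le_card hsubset).trans card_image_le

/-- The edges of the complete multipartite graph whose parts are the colour classes of `c` other
than the class of colour `0`; the vertices of colour `0` are isolated. -/
def multipartiteEdges [Fintype V] (c : V → ℕ) : Finset (Sym2 V) :=
  {e | 0 ∉ e.map c ∧ ¬ (e.map c).IsDiag}

theorem exists_mem_multipartiteEdges_of_isCycleOn_univ [Fintype V] {σ : Equiv.Perm V}
    (hσ : σ.IsCycleOn Set.univ) {c : V → ℕ} (hzero : ∃ v, c v = 0)
    (hc : #{v | c v = 0} < #((univ.image c).erase 0)) :
    ∃ v, s(v, σ v) ∈ multipartiteEdges c := by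
  classical
  by_contra! hout
  let T : Finset V := {v | c v = 0}
  have hT : T.Nonempty := by simpa [T, Finset.Nonempty] using hzero
  have hconst : ∀ v ∉ T, σ v ∉ T → c (σ v) = c v := by
    intro v hv hσv
    simp only [T, mem_filter_univ] at hv hσv
    by_contra hne
    exact hout v (by simp [multipartiteEdges, Ne.symm hne, or_imp, forall_and, hv, hσv])
  have hsubset : (univ.image c).erase 0 ⊆ Tᶜ.image c := by
    intro k hk
    obtain ⟨hk, hk_image⟩ := mem_erase.1 hk
    obtain ⟨v, -, rfl⟩ := mem_image.1 hk_image
    exact mem_image_of_mem c (by simpa [T] using hk)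
  exact hc.not_ge <|
    (card_le_card hsubset).trans (card_image_compl_le_of_isCycleOn_univ hσ hT hconst)

/-- The vertices `x ≠ w` with at most one neighbour other than `w` in the complement of the edge
set `D`. A Hamiltonian cycle that avoids `D` has to use the edge `xw`. -/
def hubVertices [Fintype V] [DecidableEq V] (D : Finset (Sym2 V)) (w : V) : Finset V :=
  {x | x ≠ w ∧ #{y | y ≠ x ∧ y ≠ w ∧ s(x, y) ∉ D} ≤ 1}

theorem exists_mem_of_isCycleOn_univ_of_two_lt_card_hubVertices [Fintype V] [DecidableEq V]
    {σ : Equiv.Perm V} (hσ : σ.IsCycleOn Set.univ) {D : Finset (Sym2 V)} {w : V}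
    (hw : 2 < #(hubVertices D w)) : ∃ v, s(v, σ v) ∈ D := by
  by_contra! hout
  have hσσ (x : V) : σ (σ x) ≠ x :=
    apply_apply_ne_of_isCycleOn_univ hσ (hw.trans_le (card_le_univ _)) x
  have hσ_ne (x : V) : σ x ≠ x := fun h => hσσ x (by rw [h, h])
  have hadjacent : hubVertices D w ⊆ {σ w, σ.symm w} := by
    intro x hx
    simp only [hubVertices, mem_filter_univ] at hx
    by_contra hxw
    simp only [mem_insert, mem_singleton, not_or] at hxw
    refine hx.2.not_gt (one_lt_card.2 ⟨σ x, ?_, σ.symm x, ?_, ?_⟩)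
    · rw [mem_filter_univ]
      exact ⟨hσ_ne x, fun h => hxw.2 (σ.eq_symm_apply.2 h), hout x⟩
    · rw [mem_filter_univ]
      refine ⟨fun h => hσ_ne x (σ.symm_apply_eq.1 h).symm,
        fun h => hxw.1 (σ.symm_apply_eq.1 h), ?_⟩
      simpa [Sym2.eq_swap] using hout (σ.symm x)
    · exact fun h => hσσ x (σ.eq_symm_apply.1 h)
  exact hw.not_ge ((card_le_card hadjacent).trans card_le_two)

end HamiltonianCycles

theorem exists_sym2Map_eq {V : Type*} {e f : Sym2 V} (he : ¬ e.IsDiag) (hf : ¬ f.IsDiag) :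
    ∃ g : V ↪ V, g.sym2Map e = f := by
  classical
  induction e with | h a b => ?_
  induction f with | h c d => ?_
  rw [Sym2.mk_isDiag_iff] at he hf
  have hcb : c ≠ Equiv.swap a c b := by
    rw [ne_comm, Ne, Equiv.swap_apply_eq_iff, Equiv.swap_apply_right]
    exact Ne.symm he
  refine ⟨(Equiv.swap (Equiv.swap a c b) d * Equiv.swap a c).toEmbedding, ?_⟩
  simp [Equiv.swap_apply_of_ne_of_ne hcb hf]

section Board

variable {n : ℕ}

theorem mem_board {e : Sym2 (Fin n)} : e ∈ Board n ↔ ¬ e.IsDiag := by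
  simp [Board]

theorem map_sym2Map_board (g : Fin n ↪ Fin n) : (Board n).map g.sym2Map = Board n := by
  refine eq_of_subset_of_card_le (fun e he => ?_) (card_map _).ge
  obtain ⟨f, hf, rfl⟩ := mem_map.1 he
  rw [mem_board] at hf ⊢
  exact (Sym2.isDiag_map g.injective).not.2 hf

theorem map_sym2Map_mem_hamCycles (g : Fin n ↪ Fin n) {H : Finset (Sym2 (Fin n))}
    (hH : H ∈ HamCycles n) : H.map g.sym2Map ∈ HamCycles n := by
  obtain ⟨a, p, hp, rfl⟩ := hH
  let φ : (⊤ : SimpleGraph (Fin n)) →g ⊤ := ⟨g, g.injective.ne⟩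
  refine ⟨g a, p.map φ, hp.map (Finite.injective_iff_bijective.1 g.injective), ?_⟩
  ext e
  simp only [mem_map, List.mem_toFinset, SimpleGraph.Walk.edges_map, List.mem_map]
  rfl

theorem image_map_sym2Map_hamCycles (g : Fin n ↪ Fin n) :
    Finset.map g.sym2Map '' HamCycles n = HamCycles n :=
  Set.eq_of_subset_of_ncard_le (Set.image_subset_iff.2 fun _ => map_sym2Map_mem_hamCycles g)
    (Set.ncard_image_of_injective _ (map_injective _)).ge

theorem forall_mem_hamCycles_exists_mem {D : Finset (Sym2 (Fin n))}
    (hD : ∀ σ : Equiv.Perm (Fin n), σ.IsCycleOn Set.univ → ∃ v, s(v, σ v) ∈ D) :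
    ∀ H ∈ HamCycles n, ∃ e ∈ H, e ∈ D := by
  rintro _ ⟨a, p, hp, rfl⟩
  obtain ⟨σ, hσ, hedges⟩ := exists_isCycleOn_univ_of_isHamiltonianCycle hp
  obtain ⟨v, hv⟩ := hD σ hσ
  exact ⟨s(v, σ v), List.mem_toFinset.2 (hedges v), hv⟩

theorem Threat.Wins.map_sym2Map {t : Threat (Sym2 (Fin n))}
    (ht : t.Wins (Board n) (HamCycles n)) (g : Fin n ↪ Fin n) :
    (t.map g.sym2Map).Wins (Board n) (HamCycles n) := by
  let φ := Equiv.ofBijective g.sym2Map (Finite.injective_iff_bijective.1 g.sym2Map.injective)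
  have hφ : φ.toEmbedding = g.sym2Map := rfl
  simpa only [hφ, map_sym2Map_board, image_map_sym2Map_hamCycles] using ht.map φ

theorem Threat.Wins.breakerWinsFirst_and_breakerWinsSecond {t : Threat (Sym2 (Fin n))}
    (ht : t.Wins (Board n) (HamCycles n)) (howned : t.owned = ∅) {e : Sym2 (Fin n)}
    (he : ¬ e.IsDiag) (hfree : e ∉ t.free) :
    BreakerWinsFirst (Board n) (HamCycles n) ∧ BreakerWinsSecond (Board n) (HamCycles n) := by
  have hfirst : BreakerWinsFirst (Board n) (HamCycles n) :=
    ht howned.subset (disjoint_empty_right _)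
  refine ⟨hfirst, .true_of_forall_insert hfirst fun f hf _ _ => ?_⟩
  obtain ⟨g, rfl⟩ := exists_sym2Map_eq he (mem_board.1 hf)
  refine ht.map_sym2Map g (by simp [Threat.map, howned]) ?_
  rwa [union_empty, disjoint_insert_right, and_iff_left (disjoint_empty_right _), Threat.map,
    mem_map']

end Board

/-- A step of a list that builds up winning threats in the Hamiltonicity game on `K_n`:
* `multipartite c` and `hub w D` say that `multipartiteEdges c`, respectively `D`, meets every
  Hamiltonian cycle;
* `claim e replies` lets Breaker claim `e` and wait for Maker's answer. A pair `(i, g)` in `replies`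
  stands for the `i`-th threat built before, counted from `0`, with its vertices relabelled by
  `g`. -/
inductive ThreatStep (n : ℕ)
  | multipartite (c : Fin n → ℕ)
  | hub (w : Fin n) (D : Finset (Sym2 (Fin n)))
  | claim (e : Sym2 (Fin n)) (replies : List (ℕ × (Fin n → Fin n)))

namespace ThreatStep

variable {n : ℕ}

/-- The relabelled threats that the pairs in `replies` stand for when the threats built so far are
`ts`. Pairs with an index out of range or a non-injective relabelling are ignored. -/
def replyThreats (ts : List (Threat (Sym2 (Fin n)))) (replies : List (ℕ × (Fin n → Fin n))) :
    List (Threat (Sym2 (Fin n))) :=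
  replies.filterMap fun r =>
    if hr : r.2.Injective then ts[r.1]?.map (.map (.sym2Map ⟨r.2, hr⟩)) else none

/-- The threat built by a step after the threats `ts`, or `none` if the conditions under which it
wins are violated. -/
def threat? (ts : List (Threat (Sym2 (Fin n)))) : ThreatStep n → Option (Threat (Sym2 (Fin n)))
  | multipartite c =>
    if (∃ v, c v = 0) ∧ #{v | c v = 0} < #((univ.image c).erase 0) then
      some ⟨multipartiteEdges c, ∅⟩
    else none
  | hub w D => if 2 < #(hubVertices D w) then some ⟨D, ∅⟩ else none
  | claim e replies =>
    let us := replyThreats ts replies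
    if ¬ e.IsDiag ∧ (∀ u ∈ us, e ∉ u.free) ∧
        ∀ f : Sym2 (Fin n), ¬ f.IsDiag → ∃ u ∈ us, f ∉ u.free then
      some (.claim e us)
    else none

/-- The threats built by a list of steps; a step that does not build one is skipped. -/
def threats (steps : List (ThreatStep n)) : List (Threat (Sym2 (Fin n))) :=
  steps.foldl (fun ts s => ts ++ (s.threat? ts).toList) []

variable {ts : List (Threat (Sym2 (Fin n)))}

theorem wins_of_mem_replyThreats (hts : ∀ t ∈ ts, t.Wins (Board n) (HamCycles n))
    {replies : List (ℕ × (Fin n → Fin n))} :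
    ∀ t ∈ replyThreats ts replies, t.Wins (Board n) (HamCycles n) := by
  intro t ht
  obtain ⟨⟨i, g⟩, -, hi⟩ := List.mem_filterMap.1 ht
  simp only [Option.dite_none_right_eq_some, Option.map_eq_some_iff] at hi
  obtain ⟨hg, u, hu, rfl⟩ := hi
  exact (hts u (List.mem_of_getElem? hu)).map_sym2Map ⟨g, hg⟩

theorem wins_of_threat?_eq_some (hts : ∀ t ∈ ts, t.Wins (Board n) (HamCycles n))
    {s : ThreatStep n} {t : Threat (Sym2 (Fin n))} (ht : s.threat? ts = some t) :
    t.Wins (Board n) (HamCycles n) := by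
  cases s <;> simp only [threat?, Option.ite_none_right_eq_some, Option.some.injEq] at ht <;>
    obtain ⟨hvalid, rfl⟩ := ht
  case multipartite c =>
    exact Threat.wins_of_forall_mem <| forall_mem_hamCycles_exists_mem fun σ hσ =>
      exists_mem_multipartiteEdges_of_isCycleOn_univ hσ hvalid.1 hvalid.2
  case hub w D =>
    exact Threat.wins_of_forall_mem <| forall_mem_hamCycles_exists_mem fun σ hσ =>
      exists_mem_of_isCycleOn_univ_of_two_lt_card_hubVertices hσ hvalid
  case claim e replies =>
    obtain ⟨he, hfree, hreply⟩ := hvalid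
    exact Threat.wins_claim (mem_board.2 he) (wins_of_mem_replyThreats hts) hfree
      fun f hf => hreply f (mem_board.1 hf)

theorem wins_of_mem_threats {steps : List (ThreatStep n)} :
    ∀ t ∈ threats steps, t.Wins (Board n) (HamCycles n) :=
  List.foldlRecOn (motive := fun ts => ∀ t ∈ ts, Threat.Wins (Board n) (HamCycles n) t) steps _
    (List.forall_mem_nil _) fun _ hts _ _ => List.forall_mem_append.2
      ⟨hts, fun _ ht => wins_of_threat?_eq_some hts (Option.mem_toList.1 ht)⟩

theorem breakerWinsFirst_and_breakerWinsSecond {steps : List (ThreatStep n)}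
    (h : ∃ t ∈ threats steps, t.owned = ∅ ∧ ∃ e : Sym2 (Fin n), ¬ e.IsDiag ∧ e ∉ t.free) :
    BreakerWinsFirst (Board n) (HamCycles n) ∧ BreakerWinsSecond (Board n) (HamCycles n) := by
  obtain ⟨t, ht, howned, e, he, hfree⟩ := h
  exact (wins_of_mem_threats t ht).breakerWinsFirst_and_breakerWinsSecond howned he hfree

end ThreatStep

/-- Breaker's strategy on `K_4`. Like those below, it was found by a computer search. -/
def threatSteps4 : List (ThreatStep 4) := [
  .multipartite ![1, 2, 2, 0],
  .claim s(0, 1) [(0, ![0, 1, 2, 3])],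
  .claim s(0, 2) [(1, ![0, 3, 2, 1]), (1, ![2, 1, 0, 3])]]

/-- Breaker's strategy on `K_5`. -/
def threatSteps5 : List (ThreatStep 5) := [
  .multipartite ![1, 2, 3, 0, 0],
  .multipartite ![1, 2, 2, 2, 0],
  .claim s(0, 1) [(0, ![0, 1, 2, 3, 4])],
  .claim s(0, 1) [(1, ![0, 1, 2, 3, 4])],
  .claim s(2, 4) [(2, ![3, 4, 2, 0, 1]), (3, ![2, 0, 4, 3, 1])],
  .claim s(2, 3) [(4, ![0, 1, 2, 3, 4]), (4, ![0, 4, 3, 2, 1])]]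

/-- Breaker's strategy on `K_6`. -/
def threatSteps6 : List (ThreatStep 6) := [
  .multipartite ![1, 2, 2, 2, 2, 0],
  .multipartite ![1, 2, 3, 3, 0, 0],
  .claim s(0, 1) [(0, ![0, 1, 2, 3, 4, 5])],
  .claim s(0, 2) [(1, ![0, 1, 2, 3, 4, 5])],
  .claim s(1, 3) [(3, ![1, 4, 2, 3, 0, 5]), (3, ![3, 4, 2, 1, 0, 5])],
  .claim s(3, 5) [(2, ![3, 0, 2, 5, 4, 1]), (2, ![3, 1, 2, 5, 4, 0])],
  .claim s(2, 3) [(2, ![2, 1, 5, 3, 4, 0]), (4, ![0, 4, 5, 3, 2, 1])],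
  .claim s(3, 4) [(5, ![0, 1, 2, 3, 4, 5]), (6, ![0, 5, 3, 1, 4, 2]), (6, ![1, 5, 3, 0, 4, 2]),
    (6, ![5, 1, 3, 0, 4, 2])],
  .claim s(2, 3) [(7, ![0, 1, 2, 3, 4, 5]), (7, ![4, 1, 2, 3, 5, 0]), (7, ![4, 5, 3, 2, 1, 0]),
    (7, ![4, 5, 2, 3, 0, 1]), (7, ![4, 5, 3, 2, 0, 1]), (7, ![0, 1, 2, 3, 5, 4]),
    (7, ![0, 1, 3, 2, 5, 4]), (7, ![0, 1, 3, 2, 4, 5])]]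

/-- Breaker's strategy on `K_7`. -/
def threatSteps7 : List (ThreatStep 7) := [
  .multipartite ![1, 2, 2, 2, 2, 2, 0],
  .multipartite ![1, 2, 3, 4, 0, 0, 0],
  .multipartite ![1, 2, 3, 3, 3, 0, 0],
  .multipartite ![1, 2, 2, 3, 3, 0, 0],
  .multipartite ![1, 1, 2, 2, 2, 2, 0],
  .hub 6 {s(0, 1), s(0, 2), s(0, 4), s(0, 5), s(1, 2), s(1, 3), s(1, 5), s(2, 3), s(2, 4)},
  .claim s(0, 1) [(0, ![0, 1, 2, 3, 4, 5, 6])],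
  .claim s(0, 1) [(1, ![0, 1, 2, 3, 4, 5, 6])],
  .claim s(0, 2) [(2, ![0, 1, 2, 3, 4, 5, 6])],
  .claim s(0, 1) [(3, ![0, 1, 2, 3, 4, 5, 6])],
  .claim s(1, 3) [(3, ![0, 1, 2, 3, 4, 5, 6])],
  .claim s(0, 2) [(4, ![0, 1, 2, 3, 4, 5, 6])],
  .claim s(0, 4) [(5, ![0, 1, 2, 3, 4, 5, 6])],
  .claim s(1, 2) [(6, ![2, 4, 1, 3, 6, 5, 0]), (6, ![2, 0, 1, 3, 6, 5, 4])],
  .claim s(0, 6) [(13, ![3, 1, 6, 0, 4, 5, 2]), (7, ![0, 5, 2, 6, 4, 1, 3])],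
  .claim s(2, 3) [(6, ![2, 0, 1, 3, 6, 5, 4]), (8, ![6, 2, 3, 1, 5, 0, 4])],
  .claim s(1, 2) [(7, ![5, 1, 2, 6, 4, 0, 3]), (15, ![0, 1, 2, 3, 4, 5, 6])],
  .claim s(1, 6) [(13, ![0, 3, 6, 1, 4, 5, 2]), (16, ![0, 1, 2, 3, 4, 5, 6]),
    (16, ![3, 1, 2, 0, 4, 5, 6])],
  .claim s(3, 6) [(7, ![3, 1, 2, 6, 4, 5, 0]), (8, ![6, 2, 5, 3, 1, 0, 4])],
  .claim s(1, 6) [(18, ![0, 1, 2, 3, 4, 5, 6]), (18, ![0, 1, 2, 5, 4, 3, 6]),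
    (18, ![0, 6, 2, 3, 4, 5, 1]), (18, ![0, 6, 2, 5, 4, 3, 1])],
  .claim s(0, 6) [(6, ![6, 3, 2, 0, 4, 5, 1]), (19, ![1, 4, 6, 0, 3, 2, 5])],
  .claim s(4, 5) [(14, ![2, 1, 6, 3, 0, 4, 5]), (14, ![2, 1, 6, 3, 0, 5, 4]),
    (17, ![1, 0, 5, 3, 2, 6, 4]), (17, ![1, 0, 4, 3, 2, 6, 5])],
  .claim s(3, 5) [(6, ![3, 4, 2, 0, 6, 5, 1]), (10, ![3, 5, 2, 0, 6, 1, 4])],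
  .claim s(0, 5) [(9, ![6, 0, 3, 2, 5, 1, 4]), (11, ![5, 2, 4, 3, 0, 6, 1])],
  .claim s(0, 6) [(10, ![6, 5, 2, 0, 3, 1, 4]), (12, ![3, 6, 2, 0, 4, 5, 1])],
  .claim s(0, 5) [(6, ![5, 1, 2, 0, 4, 6, 3]), (23, ![0, 1, 5, 6, 4, 3, 2])],
  .claim s(1, 2) [(11, ![4, 2, 1, 3, 6, 5, 0]), (6, ![2, 0, 1, 3, 6, 5, 4])],
  .claim s(2, 6) [(9, ![3, 6, 5, 2, 4, 0, 1]), (26, ![0, 1, 2, 3, 4, 5, 6])],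
  .claim s(2, 6) [(9, ![3, 6, 5, 2, 4, 0, 1]), (26, ![0, 1, 4, 3, 2, 5, 6])],
  .claim s(0, 5) [(7, ![0, 2, 4, 5, 1, 3, 6]), (15, ![3, 0, 4, 1, 6, 2, 5])],
  .claim s(3, 6) [(6, ![6, 1, 0, 3, 4, 5, 2]), (22, ![2, 1, 5, 4, 0, 3, 6])],
  .claim s(3, 6) [(22, ![2, 1, 5, 4, 0, 3, 6]), (28, ![1, 0, 2, 4, 6, 5, 3]),
    (25, ![0, 1, 4, 2, 3, 6, 5]), (30, ![3, 1, 2, 0, 4, 5, 6])],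
  .claim s(0, 2) [(6, ![2, 6, 0, 3, 4, 5, 1]), (18, ![1, 5, 2, 0, 6, 3, 4])],
  .claim s(5, 6) [(17, ![0, 1, 6, 3, 4, 2, 5]), (17, ![1, 4, 2, 3, 0, 6, 5]),
    (17, ![1, 4, 2, 3, 0, 5, 6]), (17, ![0, 3, 5, 1, 4, 2, 6])],
  .claim s(0, 2) [(13, ![3, 1, 2, 0, 4, 5, 6]), (20, ![3, 1, 5, 4, 0, 6, 2]),
    (20, ![3, 4, 5, 1, 0, 6, 2]), (20, ![1, 3, 0, 4, 6, 5, 2])],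
  .claim s(0, 3) [(6, ![3, 1, 0, 6, 4, 5, 2]), (24, ![0, 1, 3, 6, 4, 2, 5])],
  .claim s(3, 5) [(28, ![1, 4, 3, 6, 2, 5, 0]), (25, ![1, 4, 5, 3, 0, 2, 6]),
    (27, ![1, 4, 3, 6, 2, 5, 0]), (27, ![4, 1, 3, 6, 2, 5, 0]), (35, ![1, 4, 3, 2, 0, 5, 6])],
  .claim s(0, 3) [(6, ![3, 1, 2, 0, 4, 6, 5]), (19, ![1, 0, 3, 2, 5, 4, 6])],
  .claim s(3, 6) [(13, ![0, 1, 3, 2, 5, 4, 6]), (37, ![0, 1, 2, 3, 4, 5, 6]),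
    (37, ![5, 1, 2, 3, 4, 0, 6]), (37, ![0, 5, 2, 3, 4, 1, 6])],
  .claim s(3, 5) [(37, ![0, 1, 5, 3, 4, 2, 6]), (20, ![1, 2, 4, 0, 6, 5, 3]),
    (37, ![0, 1, 5, 3, 6, 2, 4]), (21, ![1, 0, 4, 2, 6, 5, 3]), (21, ![0, 1, 4, 2, 6, 5, 3]),
    (37, ![0, 1, 6, 3, 4, 2, 5])],
  .claim s(3, 6) [(34, ![5, 0, 3, 1, 2, 4, 6]), (34, ![2, 0, 3, 1, 5, 6, 4]),
    (38, ![2, 0, 6, 3, 4, 5, 1]), (33, ![0, 1, 3, 2, 5, 4, 6]), (33, ![5, 1, 3, 0, 2, 4, 6]),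
    (33, ![2, 1, 3, 0, 5, 4, 6]), (33, ![1, 0, 3, 2, 5, 4, 6])],
  .claim s(2, 5) [(12, ![5, 4, 3, 1, 6, 2, 0]), (10, ![4, 1, 5, 2, 3, 0, 6])],
  .claim s(4, 6) [(28, ![1, 0, 3, 2, 4, 5, 6]), (35, ![1, 0, 3, 4, 6, 5, 2]),
    (27, ![0, 1, 3, 2, 4, 5, 6]), (27, ![1, 0, 3, 2, 4, 5, 6]), (25, ![1, 0, 5, 3, 6, 4, 2])],
  .claim s(2, 5) [(34, ![1, 6, 5, 3, 0, 2, 4]), (39, ![1, 3, 0, 5, 4, 6, 2]),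
    (34, ![3, 1, 5, 0, 6, 4, 2]), (39, ![6, 0, 1, 5, 4, 3, 2]), (38, ![1, 0, 2, 5, 4, 3, 6]),
    (39, ![1, 0, 3, 5, 4, 6, 2]), (39, ![1, 0, 6, 5, 4, 3, 2]), (34, ![3, 6, 5, 1, 0, 2, 4])],
  .claim s(0, 5) [(7, ![0, 4, 2, 5, 1, 3, 6]), (22, ![0, 3, 2, 5, 1, 6, 4])],
  .claim s(0, 3) [(16, ![1, 0, 6, 2, 5, 4, 3]), (16, ![5, 0, 4, 1, 2, 6, 3]),
    (32, ![1, 5, 3, 0, 4, 6, 2]), (32, ![1, 5, 3, 0, 6, 4, 2])],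
  .claim s(4, 6) [(6, ![4, 0, 2, 3, 1, 6, 5]), (41, ![0, 2, 5, 4, 3, 1, 6])],
  .claim s(1, 3) [(7, ![2, 1, 4, 3, 0, 5, 6]), (46, ![0, 1, 2, 3, 4, 5, 6])],
  .claim s(3, 4) [(41, ![1, 6, 2, 3, 5, 0, 4]), (41, ![1, 0, 4, 5, 3, 6, 2]),
    (41, ![1, 0, 2, 3, 5, 6, 4]), (41, ![1, 6, 4, 5, 3, 0, 2])],
  .claim s(2, 5) [(6, ![5, 1, 2, 3, 0, 6, 4]), (48, ![0, 1, 2, 3, 4, 5, 6])],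
  .claim s(0, 5) [(15, ![2, 0, 5, 1, 4, 6, 3]), (49, ![0, 1, 2, 3, 4, 5, 6]),
    (15, ![4, 0, 3, 1, 2, 6, 5]), (49, ![0, 1, 4, 5, 2, 3, 6])],
  .claim s(2, 5) [(31, ![0, 4, 2, 1, 5, 6, 3]), (49, ![2, 0, 1, 6, 4, 5, 3]),
    (49, ![2, 1, 0, 6, 4, 5, 3]), (42, ![0, 1, 6, 3, 2, 5, 4]), (42, ![1, 0, 6, 3, 2, 5, 4]),
    (31, ![0, 4, 3, 1, 5, 6, 2])],
  .claim s(2, 5) [(49, ![2, 4, 0, 5, 1, 6, 3]), (49, ![2, 0, 4, 5, 1, 6, 3]),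
    (31, ![0, 1, 3, 4, 6, 5, 2]), (42, ![4, 1, 6, 3, 2, 5, 0]), (42, ![0, 1, 6, 3, 2, 5, 4]),
    (31, ![0, 1, 2, 4, 6, 5, 3])],
  .claim s(2, 4) [(22, ![4, 1, 5, 2, 3, 0, 6]), (25, ![3, 1, 2, 4, 0, 6, 5]),
    (28, ![3, 1, 4, 2, 6, 5, 0]), (30, ![0, 1, 4, 3, 2, 5, 6])],
  .claim s(0, 6) [(29, ![0, 3, 5, 1, 6, 2, 4]), (44, ![0, 3, 6, 1, 5, 2, 4]),
    (36, ![0, 3, 6, 4, 1, 2, 5]), (53, ![0, 1, 2, 3, 4, 5, 6]), (47, ![1, 0, 2, 5, 6, 4, 3])],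
  .claim s(3, 6) [(6, ![6, 1, 2, 3, 0, 5, 4]), (41, ![1, 2, 3, 5, 6, 0, 4])],
  .claim s(0, 6) [(7, ![0, 2, 5, 6, 4, 1, 3]), (55, ![0, 1, 2, 3, 4, 5, 6])],
  .claim s(0, 5) [(6, ![5, 1, 2, 0, 4, 6, 3]), (56, ![0, 1, 2, 3, 4, 5, 6])],
  .claim s(4, 5) [(32, ![0, 3, 5, 4, 2, 6, 1]), (54, ![0, 1, 2, 3, 4, 5, 6]),
    (57, ![0, 1, 2, 3, 4, 5, 6]), (52, ![0, 3, 4, 6, 1, 2, 5]), (51, ![0, 3, 4, 6, 1, 2, 5]),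
    (50, ![4, 0, 3, 5, 1, 2, 6])],
  .claim s(2, 6) [(17, ![1, 0, 6, 3, 4, 5, 2]), (58, ![0, 1, 2, 3, 4, 5, 6]),
    (17, ![1, 0, 5, 4, 3, 6, 2]), (58, ![1, 0, 2, 3, 4, 5, 6]), (17, ![0, 1, 5, 4, 3, 6, 2]),
    (17, ![0, 1, 6, 3, 4, 5, 2]), (45, ![0, 1, 3, 2, 5, 4, 6]), (45, ![0, 1, 4, 2, 6, 3, 5])],
  .claim s(2, 5) [(59, ![0, 1, 2, 3, 4, 5, 6]), (34, ![3, 1, 5, 4, 0, 6, 2]),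
    (34, ![0, 3, 5, 4, 1, 6, 2]), (34, ![0, 1, 5, 4, 3, 6, 2]), (38, ![0, 4, 2, 5, 6, 1, 3]),
    (39, ![1, 4, 0, 5, 6, 3, 2]), (39, ![0, 1, 4, 5, 6, 3, 2]), (39, ![0, 4, 1, 5, 6, 3, 2])],
  .claim s(3, 6) [(40, ![2, 5, 0, 3, 6, 1, 4]), (40, ![4, 2, 0, 3, 6, 1, 5]),
    (40, ![5, 4, 0, 3, 6, 1, 2]), (43, ![0, 1, 2, 4, 3, 6, 5]), (60, ![0, 1, 4, 5, 2, 6, 3]),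
    (60, ![0, 1, 2, 4, 5, 6, 3]), (43, ![0, 1, 2, 4, 6, 3, 5]), (60, ![0, 1, 2, 4, 5, 3, 6]),
    (43, ![1, 0, 2, 4, 3, 6, 5]), (60, ![0, 1, 4, 5, 2, 3, 6]), (60, ![0, 1, 2, 5, 4, 6, 3]),
    (43, ![1, 0, 2, 4, 6, 3, 5]), (60, ![0, 1, 2, 5, 4, 3, 6])]]

/-- In the Maker-Breaker Hamiltonicity game on `E(K_n)` with `4 ≤ n ≤ 7`, Breaker has
a winning strategy regardless of who moves first. -/
theorem breaker_wins_small_hamiltonicity (n : ℕ) (h4 : 4 ≤ n) (h7 : n ≤ 7) :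
    BreakerWinsFirst (Board n) (HamCycles n) ∧ BreakerWinsSecond (Board n) (HamCycles n) := by
  interval_cases n
  · exact ThreatStep.breakerWinsFirst_and_breakerWinsSecond (steps := threatSteps4)
      (by decide +kernel)
  · exact ThreatStep.breakerWinsFirst_and_breakerWinsSecond (steps := threatSteps5)
      (by decide +kernel)
  · exact ThreatStep.breakerWinsFirst_and_breakerWinsSecond (steps := threatSteps6)
      (by decide +kernel)
  · exact ThreatStep.breakerWinsFirst_and_breakerWinsSecond (steps := threatSteps7)
      (by decide +kernel)
end
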